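/- arXiv:2103.01369 — 3 statements merged into one kernel-verified Lean document; each statement's English description precedes it below -/
import Mathlib

section
/- Fix ε ∈ (0, 1/5). Let E : ℕ → ℝ₊ satisfy E_n = ω(n·(log n)^{−1/5+ε}) and E_n = o(n), and set g(n) = n·(E_n/n)^{2+ε/8}, m_n = ⌈2n/E_n⌉, β_n = 1 − 2g(n)/E_n, η_n = g(n)/(2n). Let (I_n) be a sequence of finite subsets of [0,1] with |I_n| ≤ n^K for some constant K. Then there exist c > 0 and N such that for all n ≥ N: if X_0, X_1, …, X_{m_n} are i.i.d. N(0, I_n) vectors, then with probability at least 1 − e^{−cn} there is no m_n-tuple (σ^(1), …, σ^(m_n)) of points of B_n satisfying both (a) β_n − η_n ≤ (1/n)⟨σ^(i), σ^(j)⟩ ≤ β_n for all 1 ≤ i < j ≤ m_n, and (b) there exist τ_1, …, τ_{m_n} ∈ I_n with n^{−1/2}|⟨σ^(i), √(1−τ_i²)·X_0 + τ_i·X_i⟩| ≤ 2^{−E_n} for all i. -/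
/-!
The proof is a first moment (union) bound. Write `x = E_n / n → 0` and `z = x ^ (ε / 8)`, so that
the overlaps lie in `[1 - δ - η, 1 - δ]` with `δ = 2 x z` and `η = x² z / 2`, while `m ≈ 2 / x`.

* Counting (`card_cap_le`, `card_tuples_le`): all points of a tuple lie in a Hamming ball around
  the first one, so there are at most `2 ^ n * V ^ m` tuples, where a Chernoff bound gives
  `log V = n * O(x z log (1 / x))`; hence `m log V = n * O(z log (1 / x)) = o(n)`. The choices
  of `τ` contribute `n ^ (K m) = exp (o(n))`, because `1 / x ≤ log n` eventually.
* Probability (`gram_lower_bound`, `small_ball`, `fixed_tuple_bound`): for a fixed tuple and fixed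
  `τ` the normalized discrepancies form a centred Gaussian vector. Its covariance is bounded below
  by `δ - m η ≥ x z / 2`, since the Gram matrix is `(1 - δ) 𝟙𝟙ᵀ + δ I` up to entries of size `η`.
  A Fourier argument, which avoids densities and determinants, then bounds the probability that
  all coordinates are at most `t = 2 ^ (-E_n)` by `(√e * t / √l) ^ m`, with `l` any such lower
  bound in `(0, 1]`; as `m E_n ≥ 2 n`, this is at most `2 ^ (-2 n) * exp (o(n))`.

Altogether the probability is at most `2 ^ (n - 2 n) * exp (o(n))`.
-/

open MeasureTheory ProbabilityTheory Filter

/-- The standard Gaussian measure `N(0, I_n)` on `ℝ^n`. -/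
noncomputable def stdGaussian (n : ℕ) : Measure (Fin n → ℝ) :=
  Measure.pi fun _ => gaussianReal 0 1

/-- Membership in the binary cube `B_n = {-1,1}^n`. -/
def isCube {n : ℕ} (σ : Fin n → ℝ) : Prop := ∀ i, σ i = 1 ∨ σ i = -1

/-- The standard inner product on `ℝ^n`. -/
noncomputable def ip {n : ℕ} (x y : Fin n → ℝ) : ℝ := ∑ i, x i * y i

/-- The auxiliary function `g(n) = n · (E_n/n)^{2+ε/8}`. -/
noncomputable def gfun (E : ℕ → ℝ) (ε : ℝ) (n : ℕ) : ℝ :=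
  (n : ℝ) * (E n / n) ^ ((2 : ℝ) + ε / 8)

/-! ### Gaussian integrals and the small-ball bound -/

instance stdGaussian.isProbabilityMeasure (n : ℕ) : IsProbabilityMeasure (stdGaussian n) := by
  unfold _root_.stdGaussian; infer_instance

lemma integral_cexp_gaussianReal (a : ℝ) :
    ∫ x, Complex.exp (((a * x : ℝ) : ℂ) * Complex.I) ∂(gaussianReal 0 1) =
      ((Real.exp (-a ^ 2 / 2) : ℝ) : ℂ) := by
  have h := charFun_gaussianReal (μ := 0) (v := 1) a
  rw [charFun_apply_real] at h
  push_cast at h ⊢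
  rw [h]
  congr 1
  simp [neg_div]

lemma integral_cexp_pi_gaussianReal {ι : Type*} [Fintype ι] (a : ι → ℝ) :
    ∫ x, Complex.exp (((∑ i, a i * x i : ℝ) : ℂ) * Complex.I)
        ∂(Measure.pi fun _ : ι => gaussianReal 0 1) =
      ((Real.exp (-(∑ i, a i ^ 2) / 2) : ℝ) : ℂ) := by
  have h := integral_fintype_prod_eq_prod (𝕜 := ℂ)
    (fun (i : ι) (x : ℝ) => Complex.exp (((a i * x : ℝ) : ℂ) * Complex.I))
    (μ := fun _ : ι => gaussianReal 0 1)
  simp_rw [integral_cexp_gaussianReal, ← Complex.exp_sum, ← Finset.sum_mul,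
    ← Complex.ofReal_sum, ← Complex.ofReal_prod, ← Real.exp_sum] at h
  rw [h]
  congr 3
  rw [← Finset.sum_neg_distrib, Finset.sum_div]

lemma integral_cexp_pi_stdGaussian {ι : Type*} [Fintype ι] {n : ℕ} (a : ι → Fin n → ℝ) :
    ∫ X, Complex.exp (((∑ j, ∑ k, a j k * X j k : ℝ) : ℂ) * Complex.I)
        ∂(Measure.pi fun _ : ι => stdGaussian n) =
      ((Real.exp (-(∑ j, ∑ k, a j k ^ 2) / 2) : ℝ) : ℂ) := by
  have h := integral_fintype_prod_eq_prod (𝕜 := ℂ)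
    (fun (j : ι) (x : Fin n → ℝ) => Complex.exp (((∑ k, a j k * x k : ℝ) : ℂ) * Complex.I))
    (μ := fun _ : ι => stdGaussian n)
  have h1 : ∀ j, ∫ x, Complex.exp (((∑ k, a j k * x k : ℝ) : ℂ) * Complex.I) ∂(stdGaussian n) =
      ((Real.exp (-(∑ k, a j k ^ 2) / 2) : ℝ) : ℂ) := fun j =>
    integral_cexp_pi_gaussianReal (a j)
  simp_rw [h1, ← Complex.exp_sum, ← Finset.sum_mul,
    ← Complex.ofReal_sum, ← Complex.ofReal_prod, ← Real.exp_sum] at h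
  rw [h]
  congr 3
  rw [← Finset.sum_neg_distrib, Finset.sum_div]

lemma integral_exp_neg_sq_gaussianReal_le {a : ℝ} (ha : 0 < a) :
    ∫ x, Real.exp (-(a * x ^ 2) / 2) ∂(gaussianReal 0 1) ≤ (Real.sqrt a)⁻¹ := by
  rw [integral_gaussianReal_eq_integral_smul one_ne_zero]
  have h : ∀ x : ℝ, gaussianPDFReal 0 1 x • Real.exp (-(a * x ^ 2) / 2) =
      (Real.sqrt (2 * Real.pi))⁻¹ * Real.exp (-((1 + a) / 2) * x ^ 2) := by
    intro x
    simp only [gaussianPDFReal, smul_eq_mul, NNReal.coe_one, mul_one, sub_zero]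
    rw [mul_assoc, ← Real.exp_add]
    congr 2
    ring
  simp_rw [h]
  rw [integral_const_mul, integral_gaussian, ← Real.sqrt_inv, ← Real.sqrt_inv,
    ← Real.sqrt_mul (by positivity)]
  apply Real.sqrt_le_sqrt
  have : (2 * Real.pi)⁻¹ * (Real.pi / ((1 + a) / 2)) = (1 + a)⁻¹ := by
    have := Real.pi_pos
    field_simp
  rw [this]
  exact inv_anti₀ ha (by linarith)

/-- A small-ball bound for a random vector `Y` whose characteristic function is
`z ↦ exp (-q z / 2)` with `q z ≥ a ∑ zᵢ²`. By Markov's inequality the probability is at most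
`exp (m / 2) * 𝔼 exp (-|Y|² / 2)`; the integrand is the characteristic function at `Y` of an
independent standard Gaussian `z`, and exchanging the two expectations
bounds it by `𝔼 exp (-a |z|² / 2) ≤ a ^ (-m / 2)`. -/
lemma small_ball {Ω : Type*} [MeasurableSpace Ω] (μ : Measure Ω) [IsProbabilityMeasure μ]
    {m : ℕ} (Y : Fin m → Ω → ℝ) (hY : ∀ i, Measurable (Y i)) (q : (Fin m → ℝ) → ℝ)
    (hq : ∀ z : Fin m → ℝ, ∫ ω, Complex.exp (((∑ i, z i * Y i ω : ℝ) : ℂ) * Complex.I) ∂μ =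
      ((Real.exp (-q z / 2) : ℝ) : ℂ))
    {a : ℝ} (ha : 0 < a) (hqa : ∀ z, a * ∑ i, z i ^ 2 ≤ q z) :
    μ {ω | ∀ i, |Y i ω| ≤ 1} ≤ ENNReal.ofReal (Real.exp (m / 2) * (Real.sqrt a)⁻¹ ^ m) := by
  set γ : Measure (Fin m → ℝ) := Measure.pi fun _ => gaussianReal 0 1 with hγ
  set F : Ω → ℝ := fun ω => Real.exp (-(∑ i, Y i ω ^ 2) / 2) with hF
  have hFm : Measurable F := by fun_prop
  have hFi : Integrable F μ := by
    refine Integrable.of_bound hFm.aestronglyMeasurable 1 (Eventually.of_forall fun ω => ?_)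
    rw [Real.norm_of_nonneg (Real.exp_nonneg _), Real.exp_le_one_iff]
    have : 0 ≤ ∑ i, Y i ω ^ 2 := Finset.sum_nonneg fun i _ => sq_nonneg _
    linarith
  have hswap : ((∫ ω, F ω ∂μ : ℝ) : ℂ) = ((∫ z, Real.exp (-q z / 2) ∂γ : ℝ) : ℂ) := by
    rw [← integral_complex_ofReal, ← integral_complex_ofReal]
    have h1 : ∀ ω, ((F ω : ℝ) : ℂ) =
        ∫ z, Complex.exp (((∑ i, z i * Y i ω : ℝ) : ℂ) * Complex.I) ∂γ := by
      intro ω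
      rw [hF, ← integral_cexp_pi_gaussianReal (fun i => Y i ω)]
      simp_rw [mul_comm]
      rfl
    simp_rw [h1, ← hq]
    apply integral_integral_swap
    refine Integrable.of_bound (Measurable.aestronglyMeasurable ?_) 1
      (Eventually.of_forall fun p => ?_)
    · unfold Function.uncurry
      fun_prop
    · exact (Complex.norm_exp_ofReal_mul_I _).le
  have hswap' := Complex.ofReal_injective hswap
  have hle : ∫ z, Real.exp (-q z / 2) ∂γ ≤ (Real.sqrt a)⁻¹ ^ m := by
    calc ∫ z, Real.exp (-q z / 2) ∂γ ≤ ∫ z, ∏ i, Real.exp (-(a * z i ^ 2) / 2) ∂γ := by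
          refine integral_mono_of_nonneg (Eventually.of_forall fun z => Real.exp_nonneg _) ?_
            (Eventually.of_forall fun z => ?_)
          · refine Integrable.of_bound (Measurable.aestronglyMeasurable (by fun_prop)) 1
              (Eventually.of_forall fun z => ?_)
            rw [Real.norm_of_nonneg (Finset.prod_nonneg fun i _ => Real.exp_nonneg _)]
            refine Finset.prod_le_one (fun i _ => Real.exp_nonneg _) fun i _ => ?_
            rw [Real.exp_le_one_iff]
            have : 0 ≤ a * z i ^ 2 := by positivity
            linarith
          · simp only
            rw [← Real.exp_sum, Real.exp_le_exp, ← Finset.sum_div, Finset.sum_neg_distrib,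
              ← Finset.mul_sum]
            linarith [hqa z]
      _ = ∏ i : Fin m, ∫ x, Real.exp (-(a * x ^ 2) / 2) ∂(gaussianReal 0 1) :=
          integral_fintype_prod_eq_prod (𝕜 := ℝ)
            (fun (_ : Fin m) (x : ℝ) => Real.exp (-(a * x ^ 2) / 2))
      _ ≤ ∏ i : Fin m, (Real.sqrt a)⁻¹ :=
          Finset.prod_le_prod (fun i _ => integral_nonneg fun x => Real.exp_nonneg _)
            fun i _ => integral_exp_neg_sq_gaussianReal_le ha
      _ = (Real.sqrt a)⁻¹ ^ m := by simp
  have hM := mul_meas_ge_le_integral_of_nonneg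
    (Eventually.of_forall fun ω => Real.exp_nonneg (-(∑ i, Y i ω ^ 2) / 2)) hFi
    (Real.exp (-(m / 2)))
  have hsub : {ω | ∀ i, |Y i ω| ≤ 1} ⊆ {ω | Real.exp (-(m / 2)) ≤ F ω} := by
    intro ω hω
    simp only [Set.mem_ofPred_eq, hF, Real.exp_le_exp] at hω ⊢
    have : ∑ i, Y i ω ^ 2 ≤ ∑ i : Fin m, (1 : ℝ) :=
      Finset.sum_le_sum fun i _ => (sq_le_one_iff_abs_le_one _).2 (hω i)
    simp at this
    linarith
  refine (measure_mono hsub).trans ?_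
  rw [← ofReal_measureReal]
  apply ENNReal.ofReal_le_ofReal
  have hM' : Real.exp (-(m / 2)) * μ.real {ω | Real.exp (-(m / 2)) ≤ F ω} ≤ (Real.sqrt a)⁻¹ ^ m :=
    hM.trans (hswap' ▸ hle)
  calc μ.real {ω | Real.exp (-(m / 2)) ≤ F ω}
      = Real.exp (m / 2) * (Real.exp (-(m / 2)) * μ.real {ω | Real.exp (-(m / 2)) ≤ F ω}) := by
        rw [← mul_assoc, ← Real.exp_add]; simp
    _ ≤ _ := by gcongr

/-! ### Counting tuples and the Gram matrix -/

/-- The binary cube `{-1,1}^n` as a finset. -/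
noncomputable def cubeFinset (n : ℕ) : Finset (Fin n → ℝ) :=
  Fintype.piFinset fun _ => {1, -1}

lemma mem_cubeFinset {n : ℕ} {σ : Fin n → ℝ} : σ ∈ cubeFinset n ↔ isCube σ := by
  simp [cubeFinset, isCube, Fintype.mem_piFinset]

lemma card_cubeFinset (n : ℕ) : (cubeFinset n).card = 2 ^ n := by
  have h : ({1, -1} : Finset ℝ).card = 2 := Finset.card_pair (by norm_num)
  simp [cubeFinset, Fintype.card_piFinset, h]

lemma isCube.mul_self {n : ℕ} {σ : Fin n → ℝ} (h : isCube σ) (k : Fin n) : σ k * σ k = 1 := by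
  rcases h k with h | h <;> rw [h] <;> norm_num

lemma ip_self {n : ℕ} {σ : Fin n → ℝ} (h : isCube σ) : ip σ σ = n := by
  simp [ip, h.mul_self]

lemma ip_comm' {n : ℕ} (x y : Fin n → ℝ) : ip x y = ip y x := by
  simp [ip, mul_comm]

/-- The points of the cube whose inner product with `σ` is at least `(1 - d) n`. -/
noncomputable def cap {n : ℕ} (σ : Fin n → ℝ) (d : ℝ) : Finset (Fin n → ℝ) :=
  open Classical in (cubeFinset n).filter fun ρ => (1 - d) * n ≤ ip σ ρ

/-- Chernoff-type bound on the size of a Hamming ball: bound the indicator of `cap σ d` by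
`exp (θ (⟨σ, ρ⟩ - (1 - d) n))` and sum over the cube. -/
lemma card_cap_le {n : ℕ} {σ : Fin n → ℝ} (hσ : isCube σ) {d θ : ℝ} (hθ : 0 ≤ θ) :
    ((cap σ d).card : ℝ) ≤ Real.exp (n * (θ * d + Real.exp (-2 * θ))) := by
  have h1 : ((cap σ d).card : ℝ) ≤
      ∑ ρ ∈ cubeFinset n, Real.exp (θ * (ip σ ρ - (1 - d) * n)) := by
    calc ((cap σ d).card : ℝ) = ∑ ρ ∈ cap σ d, (1 : ℝ) := by simp
      _ ≤ ∑ ρ ∈ cap σ d, Real.exp (θ * (ip σ ρ - (1 - d) * n)) := by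
          refine Finset.sum_le_sum fun ρ hρ => ?_
          simp only [cap, Finset.mem_filter] at hρ
          exact Real.one_le_exp (mul_nonneg hθ (by linarith [hρ.2]))
      _ ≤ _ := Finset.sum_le_sum_of_subset_of_nonneg (Finset.filter_subset _ _)
          fun _ _ _ => Real.exp_nonneg _
  have h2 : ∑ ρ ∈ cubeFinset n, Real.exp (θ * (ip σ ρ - (1 - d) * n)) =
      Real.exp (-(θ * ((1 - d) * n))) * (Real.exp θ + Real.exp (-θ)) ^ n := by
    have h3 : ∀ k : Fin n, ∑ s ∈ ({1, -1} : Finset ℝ), Real.exp (θ * (σ k * s)) =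
        Real.exp θ + Real.exp (-θ) := by
      intro k
      rw [Finset.sum_pair (by norm_num)]
      rcases hσ k with h | h <;> rw [h] <;> simp [add_comm]
    have h4 := Finset.prod_univ_sum (fun _ : Fin n => ({1, -1} : Finset ℝ))
      (fun k s => Real.exp (θ * (σ k * s)))
    simp_rw [h3] at h4
    simp only [Finset.prod_const, Finset.card_univ, Fintype.card_fin] at h4
    rw [h4, Finset.mul_sum]
    refine Finset.sum_congr rfl fun ρ _ => ?_
    rw [← Real.exp_sum, ← Real.exp_add, ← Finset.mul_sum, ip]
    congr 1
    ring
  refine h1.trans (h2.le.trans ?_)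
  have h5 : Real.exp θ + Real.exp (-θ) ≤ Real.exp (θ + Real.exp (-2 * θ)) := by
    rw [Real.exp_add]
    have : Real.exp (-θ) = Real.exp θ * Real.exp (-2 * θ) := by
      rw [← Real.exp_add]; congr 1; ring
    rw [this]
    nlinarith [Real.add_one_le_exp (Real.exp (-2 * θ)), Real.exp_pos θ]
  calc _ ≤ Real.exp (-(θ * ((1 - d) * n))) * (Real.exp (θ + Real.exp (-2 * θ))) ^ n := by gcongr
    _ = _ := by
      rw [← Real.exp_nat_mul, ← Real.exp_add]
      congr 1
      ring

/-- All `m`-tuples contained in `cap σ₀ d` for some point `σ₀` of the cube. Every tuple with pairwise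
inner products at least `(1 - d) n` is one of these, with `σ₀` its first entry. -/
noncomputable def tuples (n m : ℕ) (d : ℝ) : Finset (Fin m → Fin n → ℝ) :=
  open Classical in (cubeFinset n).biUnion fun σ₀ => Fintype.piFinset fun _ => cap σ₀ d

lemma card_tuples_le (n m : ℕ) {d θ : ℝ} (hθ : 0 ≤ θ) :
    ((tuples n m d).card : ℝ) ≤
      2 ^ n * Real.exp (n * (θ * d + Real.exp (-2 * θ))) ^ m := by
  classical
  have h : ((tuples n m d).card : ℝ) ≤ ∑ σ₀ ∈ cubeFinset n, ((cap σ₀ d).card : ℝ) ^ m := by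
    have := Finset.card_biUnion_le (s := cubeFinset n)
      (t := fun σ₀ => Fintype.piFinset fun _ : Fin m => cap σ₀ d)
    simp only [Fintype.card_piFinset, Finset.prod_const, Finset.card_univ, Fintype.card_fin] at this
    unfold tuples
    exact_mod_cast this
  refine h.trans ?_
  calc _ ≤ ∑ σ₀ ∈ cubeFinset n, Real.exp (n * (θ * d + Real.exp (-2 * θ))) ^ m := by
        refine Finset.sum_le_sum fun σ hσ => ?_
        gcongr
        exact card_cap_le (mem_cubeFinset.1 hσ) hθ
    _ = _ := by simp [card_cubeFinset]

/-- A Gram matrix of cube points whose off-diagonal entries all lie in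
`[(1 - δ - η) n, (1 - δ) n]` is bounded below by `n (δ - m η)`. -/
lemma gram_lower_bound {n m : ℕ} {σ : Fin m → Fin n → ℝ} (hσ : ∀ i, isCube (σ i)) {δ η : ℝ}
    (hδ1 : δ ≤ 1) (hη : 0 ≤ η)
    (h : ∀ i j, i < j → ((1 - δ) - η) * n ≤ ip (σ i) (σ j) ∧ ip (σ i) (σ j) ≤ (1 - δ) * n)
    (w : Fin m → ℝ) :
    n * ((δ - m * η) * ∑ i, w i ^ 2) ≤ ∑ k, (∑ i, w i * σ i k) ^ 2 := by
  have hne : ∀ i j, i ≠ j →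
      ((1 - δ) - η) * n ≤ ip (σ i) (σ j) ∧ ip (σ i) (σ j) ≤ (1 - δ) * n := by
    intro i j hij
    rcases lt_or_gt_of_ne hij with h' | h'
    · exact h i j h'
    · rw [ip_comm']; exact h j i h'
  have hexp : ∑ k, (∑ i, w i * σ i k) ^ 2 = ∑ i, ∑ j, w i * w j * ip (σ i) (σ j) := by
    simp_rw [sq, Finset.sum_mul_sum, ip, Finset.mul_sum]
    rw [Finset.sum_comm]
    refine Finset.sum_congr rfl fun i _ => ?_
    rw [Finset.sum_comm]
    refine Finset.sum_congr rfl fun j _ => Finset.sum_congr rfl fun k _ => by ring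
  rw [hexp]
  have hn : (0 : ℝ) ≤ n := n.cast_nonneg
  have hterm : ∀ i j, (n : ℝ) * ((1 - δ) * (w i * w j) + (if i = j then δ * w i ^ 2 else 0)
      - η * (w i ^ 2 + w j ^ 2) / 2) ≤ w i * w j * ip (σ i) (σ j) := by
    intro i j
    by_cases hij : i = j
    · subst hij
      rw [ip_self (hσ i), if_pos rfl]
      nlinarith [mul_nonneg hn (mul_nonneg hη (sq_nonneg (w i)))]
    · rw [if_neg hij]
      obtain ⟨h1, h2⟩ := hne i j hij
      set r := (1 - δ) * n - ip (σ i) (σ j) with hr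
      have hip : ip (σ i) (σ j) = (1 - δ) * n - r := by rw [hr]; ring
      have hr0 : 0 ≤ r := by linarith
      have hr1 : r ≤ η * n := by linarith
      rw [hip]
      nlinarith [mul_nonneg hr0 (sq_nonneg (w i - w j)),
        mul_nonneg (sub_nonneg.2 hr1) (add_nonneg (sq_nonneg (w i)) (sq_nonneg (w j)))]
  refine le_trans ?_ (Finset.sum_le_sum fun i _ => Finset.sum_le_sum fun j _ => hterm i j)
  have hsum : ∑ i, ∑ j, ((n : ℝ) * ((1 - δ) * (w i * w j) + (if i = j then δ * w i ^ 2 else 0)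
      - η * (w i ^ 2 + w j ^ 2) / 2)) =
      n * ((1 - δ) * (∑ i, w i) ^ 2 + (δ - m * η) * ∑ i, w i ^ 2) := by
    simp_rw [← Finset.mul_sum, Finset.sum_sub_distrib, Finset.sum_add_distrib, ← Finset.sum_div,
      ← Finset.mul_sum, Finset.sum_add_distrib]
    simp only [Finset.sum_ite_eq, Finset.mem_univ, if_true, Finset.sum_const, Finset.card_univ,
      Fintype.card_fin, nsmul_eq_mul, ← Finset.mul_sum, ← Finset.sum_mul]
    ring
  rw [hsum]
  gcongr
  nlinarith [mul_nonneg (sub_nonneg.2 hδ1) (sq_nonneg (∑ i, w i))]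

/-! ### The union bound -/

/-- For fixed `σ` and `τ`, the vector of discrepancies is a centred Gaussian vector with covariance
`D G D + diag (τ²)`, where `G` is the normalized Gram matrix of `σ` and `D = diag (√(1 - τ²))`.
It is bounded below by `l` because `G ≥ l` and `l ≤ 1`. -/
lemma fixed_tuple_bound {n m : ℕ} (hn : 0 < n) {σ : Fin m → Fin n → ℝ} (hσ : ∀ i, isCube (σ i))
    {δ η l t : ℝ} (hδ1 : δ ≤ 1) (hη : 0 ≤ η) (hl0 : 0 < l) (hl1 : l ≤ 1) (hl : l ≤ δ - m * η)
    (ht : 0 < t)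
    (h : ∀ i j, i < j → ((1 - δ) - η) * n ≤ ip (σ i) (σ j) ∧ ip (σ i) (σ j) ≤ (1 - δ) * n)
    {τ : Fin m → ℝ} (hτ : ∀ i, τ i ∈ Set.Icc (0 : ℝ) 1) :
    (Measure.pi fun _ : Fin (m + 1) => stdGaussian n)
      {X : Fin (m + 1) → Fin n → ℝ |
        ∀ i, |ip (σ i) (fun k => Real.sqrt (1 - τ i ^ 2) * X 0 k + τ i * X i.succ k)|
          / Real.sqrt n ≤ t} ≤
      ENNReal.ofReal (Real.exp (m / 2) * (t / Real.sqrt l) ^ m) := by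
  have hn' : (0 : ℝ) < n := by exact_mod_cast hn
  have hsn : 0 < Real.sqrt n := by positivity
  -- the coefficients of `X` in `∑ i, z i * Y i`, where `Y i` is the discrepancy divided by `t`
  let A : (Fin m → ℝ) → Fin (m + 1) → Fin n → ℝ := fun z =>
    Fin.cons (fun k => (∑ i, (z i * Real.sqrt (1 - τ i ^ 2)) * σ i k) / (Real.sqrt n * t))
      (fun i k => z i * τ i * σ i k / (Real.sqrt n * t))
  have hb := small_ball (Measure.pi fun _ : Fin (m + 1) => stdGaussian n)
    (fun i X => ip (σ i) (fun k => Real.sqrt (1 - τ i ^ 2) * X 0 k + τ i * X i.succ k)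
      / (Real.sqrt n * t)) (fun i => by unfold ip; fun_prop)
    (fun z => ∑ j, ∑ k, A z j k ^ 2) (fun z => by
      rw [← integral_cexp_pi_stdGaussian]
      congr 1
      funext X
      congr 3
      rw [Fin.sum_univ_succ]
      simp only [A, Fin.cons_zero, Fin.cons_succ, ip]
      simp_rw [Finset.sum_div, Finset.mul_sum, Finset.sum_mul]
      rw [Finset.sum_comm (f := fun k i => z i * Real.sqrt (1 - τ i ^ 2) * σ i k
        / (Real.sqrt n * t) * X 0 k), ← Finset.sum_add_distrib]
      refine Finset.sum_congr rfl fun i _ => ?_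
      rw [← Finset.sum_add_distrib]
      refine Finset.sum_congr rfl fun k _ => ?_
      ring)
    (a := l / t ^ 2) (by positivity) (fun z => by
      rw [Fin.sum_univ_succ]
      simp only [A, Fin.cons_zero, Fin.cons_succ]
      have hsq : (Real.sqrt n * t) ^ 2 = n * t ^ 2 := by rw [mul_pow, Real.sq_sqrt hn'.le]
      have h1 : ∀ i, ∑ k, (z i * τ i * σ i k / (Real.sqrt n * t)) ^ 2 =
          z i ^ 2 * τ i ^ 2 / t ^ 2 := by
        intro i
        have : ∀ k, (z i * τ i * σ i k / (Real.sqrt n * t)) ^ 2 =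
            z i ^ 2 * τ i ^ 2 / (n * t ^ 2) := by
          intro k
          rw [div_pow, hsq, mul_pow, mul_pow, sq (σ i k), (hσ i).mul_self k, mul_one]
        simp_rw [this]
        simp only [Finset.sum_const, Finset.card_univ, Fintype.card_fin, nsmul_eq_mul]
        field_simp
      simp_rw [h1, div_pow, hsq, ← Finset.sum_div]
      have h2 := gram_lower_bound hσ hδ1 hη h (fun i => z i * Real.sqrt (1 - τ i ^ 2))
      have h3 : ∀ i, (z i * Real.sqrt (1 - τ i ^ 2)) ^ 2 = z i ^ 2 * (1 - τ i ^ 2) := by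
        intro i
        rw [mul_pow, Real.sq_sqrt]
        nlinarith [(hτ i).1, (hτ i).2]
      simp_rw [h3] at h2
      have hnn : 0 ≤ ∑ i, z i ^ 2 * (1 - τ i ^ 2) :=
        Finset.sum_nonneg fun i _ => mul_nonneg (sq_nonneg _)
          (by nlinarith [(hτ i).1, (hτ i).2])
      have h4 : l * ∑ i, z i ^ 2 ≤
          l * (∑ i, z i ^ 2 * (1 - τ i ^ 2)) + ∑ i, z i ^ 2 * τ i ^ 2 := by
        have hnn' : 0 ≤ ∑ i, z i ^ 2 * τ i ^ 2 := Finset.sum_nonneg fun i _ => by positivity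
        have : ∑ i, z i ^ 2 = ∑ i, z i ^ 2 * (1 - τ i ^ 2) + ∑ i, z i ^ 2 * τ i ^ 2 := by
          rw [← Finset.sum_add_distrib]
          exact Finset.sum_congr rfl fun i _ => by ring
        rw [this]
        nlinarith
      have h5 : l * (∑ i, z i ^ 2 * (1 - τ i ^ 2)) ≤
          (∑ k, (∑ i, z i * Real.sqrt (1 - τ i ^ 2) * σ i k) ^ 2) / n := by
        rw [le_div_iff₀ hn', mul_comm]
        refine le_trans ?_ h2
        gcongr
      rw [← div_div, ← add_div, div_mul_eq_mul_div]
      gcongr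
      linarith)
  have ha : (Real.sqrt (l / t ^ 2))⁻¹ = t / Real.sqrt l := by
    rw [Real.sqrt_div hl0.le, Real.sqrt_sq ht.le, inv_div]
  rw [ha] at hb
  refine (measure_mono ?_).trans hb
  intro X hX i
  have := hX i
  rw [abs_div, abs_of_pos (mul_pos hsn ht), ← div_div]
  exact div_le_one_of_le₀ this ht.le

/-- Union bound over all pairs `(σ, τ)`; the parameter `θ` of the Chernoff bound is left free. -/
lemma union_bound {n m : ℕ} (hn : 0 < n) (hm : 0 < m) (J : Finset ℝ)
    (hJ : (J : Set ℝ) ⊆ Set.Icc (0 : ℝ) 1)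
    {δ η l t θ : ℝ} (hδ0 : 0 ≤ δ) (hδ1 : δ ≤ 1) (hη : 0 ≤ η) (hl0 : 0 < l) (hl1 : l ≤ 1)
    (hl : l ≤ δ - m * η) (ht : 0 < t) (hθ : 0 ≤ θ) :
    (Measure.pi fun _ : Fin (m + 1) => stdGaussian n)
      {X : Fin (m + 1) → Fin n → ℝ |
        ∃ σ : Fin m → Fin n → ℝ, (∀ i, isCube (σ i)) ∧
          (∀ i j, i < j → (1 - δ) - η ≤ ip (σ i) (σ j) / n ∧ ip (σ i) (σ j) / n ≤ 1 - δ) ∧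
          ∃ τ : Fin m → ℝ, (∀ i, τ i ∈ J) ∧
            ∀ i, |ip (σ i) (fun k => Real.sqrt (1 - τ i ^ 2) * X 0 k + τ i * X i.succ k)|
              / Real.sqrt n ≤ t} ≤
      ENNReal.ofReal (2 ^ n * Real.exp (n * (θ * (δ + η) + Real.exp (-2 * θ))) ^ m *
        (J.card : ℝ) ^ m * (Real.exp (m / 2) * (t / Real.sqrt l) ^ m)) := by
  classical
  have hn' : (0 : ℝ) < n := by exact_mod_cast hn
  set μ := (Measure.pi fun _ : Fin (m + 1) => stdGaussian n) with hμ
  set P : (Fin m → Fin n → ℝ) → Prop := fun σ => (∀ i, isCube (σ i)) ∧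
    ∀ i j, i < j → (1 - δ) - η ≤ ip (σ i) (σ j) / n ∧ ip (σ i) (σ j) / n ≤ 1 - δ with hP
  set S : Finset ((Fin m → Fin n → ℝ) × (Fin m → ℝ)) :=
    ((tuples n m (δ + η)).filter P) ×ˢ (Fintype.piFinset fun _ => J) with hS
  set B : ((Fin m → Fin n → ℝ) × (Fin m → ℝ)) → Set (Fin (m + 1) → Fin n → ℝ) := fun p =>
    {X | ∀ i, |ip (p.1 i) (fun k => Real.sqrt (1 - p.2 i ^ 2) * X 0 k + p.2 i * X i.succ k)|
              / Real.sqrt n ≤ t} with hB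
  set b := Real.exp (m / 2) * (t / Real.sqrt l) ^ m with hb
  have hb0 : 0 ≤ b := by positivity
  have hBb : ∀ p ∈ S, μ (B p) ≤ ENNReal.ofReal b := by
    intro p hp
    simp only [hS, Finset.mem_product, Finset.mem_filter, Fintype.mem_piFinset] at hp
    obtain ⟨⟨-, hc, ho⟩, hτ⟩ := hp
    refine fixed_tuple_bound hn hc hδ1 hη hl0 hl1 hl ht ?_ fun i => hJ (hτ i)
    intro i j hij
    obtain ⟨h1, h2⟩ := ho i j hij
    exact ⟨(le_div_iff₀ hn').1 h1, (div_le_iff₀ hn').1 h2⟩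
  have hcov : {X : Fin (m + 1) → Fin n → ℝ |
        ∃ σ : Fin m → Fin n → ℝ, (∀ i, isCube (σ i)) ∧
          (∀ i j, i < j → (1 - δ) - η ≤ ip (σ i) (σ j) / n ∧ ip (σ i) (σ j) / n ≤ 1 - δ) ∧
          ∃ τ : Fin m → ℝ, (∀ i, τ i ∈ J) ∧
            ∀ i, |ip (σ i) (fun k => Real.sqrt (1 - τ i ^ 2) * X 0 k + τ i * X i.succ k)|
              / Real.sqrt n ≤ t} ⊆ ⋃ p ∈ S, B p := by
    rintro X ⟨σ, hc, ho, τ, hτ, hX⟩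
    refine Set.mem_biUnion (x := (σ, τ)) ?_ hX
    simp only [hS, Finset.coe_product, Set.mem_prod, Finset.mem_coe, Finset.mem_filter,
      Fintype.mem_piFinset]
    refine ⟨⟨?_, hc, ho⟩, hτ⟩
    simp only [tuples, Finset.mem_biUnion, Fintype.mem_piFinset, cap, Finset.mem_filter]
    refine ⟨σ ⟨0, hm⟩, mem_cubeFinset.2 (hc _), fun i => ⟨mem_cubeFinset.2 (hc i), ?_⟩⟩
    by_cases hi : i = ⟨0, hm⟩
    · subst hi
      rw [ip_self (hc _)]
      nlinarith
    · have hlt : (⟨0, hm⟩ : Fin m) < i := by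
        rw [Fin.lt_def]
        have : (i : ℕ) ≠ 0 := fun h0 => hi (Fin.ext h0)
        exact Nat.pos_of_ne_zero this
      have := (le_div_iff₀ hn').1 (ho _ _ hlt).1
      linarith
  have hcard : (S.card : ℝ) ≤ 2 ^ n * Real.exp (n * (θ * (δ + η) + Real.exp (-2 * θ))) ^ m *
        (J.card : ℝ) ^ m := by
    rw [hS, Finset.card_product, Fintype.card_piFinset]
    simp only [Finset.prod_const, Finset.card_univ, Fintype.card_fin]
    push_cast
    gcongr
    refine le_trans ?_ (card_tuples_le n m hθ)
    exact_mod_cast Finset.card_filter_le _ _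
  calc _ ≤ μ (⋃ p ∈ S, B p) := measure_mono hcov
    _ ≤ ∑ p ∈ S, μ (B p) := measure_biUnion_finset_le _ _
    _ ≤ ∑ p ∈ S, ENNReal.ofReal b := Finset.sum_le_sum hBb
    _ = ENNReal.ofReal (S.card * b) := by
      rw [Finset.sum_const, nsmul_eq_mul, ENNReal.ofReal_mul (p := S.card) (Nat.cast_nonneg _),
        ENNReal.ofReal_natCast]
    _ ≤ _ := ENNReal.ofReal_le_ofReal (by gcongr)

/-! ### Asymptotics of the exponent -/

/-- The arithmetic of the exponents. Here `x = E / n`, `z = x ^ (ε / 8)` and `L = log (1 / x)`, so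
that `n (L (2 x z + x² z / 2) + x²)` bounds the logarithm of the size of a cap; since `m E ≥ 2 n`,
the factor `2 ^ (-m E)` beats the `2 ^ n` choices of the first point. -/
lemma exponent_le {n m x z L lg K E : ℝ} (hn : 0 < n) (hm0 : 0 ≤ m) (hx0 : 0 < x)
    (hx : x ≤ 1 / 30) (hmx : m * x ≤ 3) (hxlg : 1 ≤ x * lg) (hz : 0 ≤ z) (hL0 : 0 ≤ L)
    (hLlg : L ≤ lg) (hLz : L * z ≤ 1 / 90) (hK : 0 ≤ K)
    (hlgn : 3 * lg * ((K + 2) * lg + 1 / 2) ≤ n / 10) (hmE : 2 * n ≤ m * E) :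
    n * Real.log 2 + m * (n * (L * (2 * (x * z) + x * (x * z) / 2) + x ^ 2)) + m * (K * lg) +
      (m / 2 + m * (-(E * Real.log 2) + 2 * L)) ≤ -(Real.log 2 / 2) * n := by
  have hlog2 : 0.6931471803 < Real.log 2 := Real.log_two_gt_d9
  have hlg : 0 ≤ lg := hL0.trans hLlg
  have hmlg : m ≤ 3 * lg := by nlinarith [mul_le_mul_of_nonneg_right hmx hlg]
  have h1 : m * (n * (L * (2 * (x * z) + x * (x * z) / 2))) ≤ n * (1 / 10) := by
    have h2 : m * (n * (L * (2 * (x * z) + x * (x * z) / 2))) =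
        n * ((m * x) * ((L * z) * (2 + x / 2))) := by ring
    rw [h2]
    have h3 : (L * z) * (2 + x / 2) ≤ 1 / 90 * 3 := by
      gcongr
      linarith
    have h4 : (m * x) * ((L * z) * (2 + x / 2)) ≤ 3 * (1 / 90 * 3) := by gcongr
    gcongr
    linarith
  have h5 : m * (n * x ^ 2) ≤ n * (1 / 10) := by
    have h6 : m * (n * x ^ 2) = n * ((m * x) * x) := by ring
    rw [h6]
    have h7 : (m * x) * x ≤ 3 * (1 / 30) := by gcongr
    gcongr
    linarith
  have h8 : m * (K * lg) + m / 2 + m * (2 * L) ≤ n / 10 := by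
    refine le_trans ?_ hlgn
    have h9 : m * (K * lg) + m / 2 + m * (2 * L) = m * (K * lg + 2 * L + 1 / 2) := by ring
    rw [h9]
    have h10 : K * lg + 2 * L + 1 / 2 ≤ (K + 2) * lg + 1 / 2 := by linarith
    gcongr
  have h11 : 2 * n * Real.log 2 ≤ m * E * Real.log 2 := by gcongr
  nlinarith [mul_lt_mul_of_pos_left hlog2 hn]

/-- `m`-OGP with super-constant `m = ⌈2n/E_n⌉` in the special regime
`E_n = ω(n · (log n)^{-1/5+ε})`, `E_n = o(n)`, with `g(n) = n (E_n/n)^{2+ε/8}`. -/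
theorem m_ogp_superconstant_special (ε : ℝ) (hε0 : 0 < ε) (hε5 : ε < 1 / 5)
    (E : ℕ → ℝ) (hEpos : ∀ n, 0 < E n)
    (hEomega : Tendsto
      (fun n : ℕ => E n / ((n : ℝ) * Real.log n ^ (-(1 / 5 : ℝ) + ε))) atTop atTop)
    (hEo : Tendsto (fun n : ℕ => E n / n) atTop (nhds 0))
    (I : ℕ → Finset ℝ) (hI : ∀ n, ↑(I n) ⊆ Set.Icc (0 : ℝ) 1)
    (K : ℕ) (hIcard : ∀ n, (I n).card ≤ n ^ K) :
    ∃ c : ℝ, 0 < c ∧ ∃ N : ℕ, ∀ n : ℕ, N ≤ n →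
      (Measure.pi fun _ : Fin (⌈2 * (n : ℝ) / E n⌉₊ + 1) => stdGaussian n)
        {X : Fin (⌈2 * (n : ℝ) / E n⌉₊ + 1) → Fin n → ℝ |
          ∃ σ : Fin ⌈2 * (n : ℝ) / E n⌉₊ → Fin n → ℝ,
            (∀ i, isCube (σ i)) ∧
            (∀ i j, i < j →
              (1 - 2 * gfun E ε n / E n) - gfun E ε n / (2 * n) ≤ ip (σ i) (σ j) / n ∧
              ip (σ i) (σ j) / n ≤ 1 - 2 * gfun E ε n / E n) ∧
            ∃ τ : Fin ⌈2 * (n : ℝ) / E n⌉₊ → ℝ, (∀ i, τ i ∈ I n) ∧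
              ∀ i, |ip (σ i) (fun k => Real.sqrt (1 - τ i ^ 2) * X 0 k + τ i * X i.succ k)|
                / Real.sqrt n ≤ (2 : ℝ) ^ (-(E n))} ≤
      ENNReal.ofReal (Real.exp (-c * n)) := by
  -- any `c < log 2` works, as all terms other than `2 ^ n * 2 ^ (-m E)` are `exp (o(n))`
  refine ⟨Real.log 2 / 2, half_pos (Real.log_pos one_lt_two), ?_⟩
  have hlogn : Tendsto (fun n : ℕ => Real.log n) atTop atTop :=
    Real.tendsto_log_atTop.comp tendsto_natCast_atTop_atTop
  have ev1 : ∀ᶠ n : ℕ in atTop, E n / n < 1 / 30 := hEo.eventually_lt_const (by norm_num)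
  have hEo' : Tendsto (fun n : ℕ => E n / n) atTop (nhdsWithin 0 (Set.Ioi 0)) := by
    refine tendsto_nhdsWithin_iff.2 ⟨hEo, ?_⟩
    filter_upwards [eventually_gt_atTop 0] with n hn
    exact div_pos (hEpos n) (by exact_mod_cast hn)
  have ev2 : ∀ᶠ n : ℕ in atTop, -(1 / 90) < Real.log (E n / n) * (E n / n) ^ (ε / 8) :=
    ((tendsto_log_mul_rpow_nhdsGT_zero (r := ε / 8) (by positivity)).comp
      hEo').eventually_const_lt (by norm_num)
  have ev3 : ∀ᶠ n : ℕ in atTop,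
      3 * Real.log n * (((K : ℝ) + 2) * Real.log n + 1 / 2) ≤ (n : ℝ) / 10 := by
    have h2 := (Real.tendsto_pow_log_div_mul_add_atTop 1 0 2 one_ne_zero).comp
      (tendsto_natCast_atTop_atTop (R := ℝ))
    have h1 := (Real.tendsto_pow_log_div_mul_add_atTop 1 0 1 one_ne_zero).comp
      (tendsto_natCast_atTop_atTop (R := ℝ))
    have h3 := (h2.const_mul (3 * ((K : ℝ) + 2))).add (h1.const_mul (3 / 2))
    have h4 := h3.eventually_lt_const (u := 1 / 10) (by norm_num)
    filter_upwards [h4, eventually_gt_atTop 0] with n hn hn0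
    have hn' : (0 : ℝ) < n := by exact_mod_cast hn0
    simp only [Function.comp, one_mul, add_zero, pow_one] at hn
    have h5 : (3 * ((K : ℝ) + 2) * (Real.log n ^ 2 / n) + 3 / 2 * (Real.log n / n)) * n
        ≤ 1 / 10 * n := by gcongr
    have h6 : (3 * ((K : ℝ) + 2) * (Real.log n ^ 2 / n) + 3 / 2 * (Real.log n / n)) * n =
        3 * Real.log n * (((K : ℝ) + 2) * Real.log n + 1 / 2) := by
      field_simp
    linarith
  have hev := ev1.and (ev2.and (ev3.and ((hEomega.eventually_ge_atTop 1).and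
    ((hlogn.eventually_ge_atTop 1).and (eventually_gt_atTop 0)))))
  obtain ⟨N, hN⟩ := eventually_atTop.1 hev
  refine ⟨N, fun n hn => ?_⟩
  obtain ⟨hx30, hLz, hlgn, hom, hlg1, hn0⟩ := hN n hn
  have hn' : (0 : ℝ) < n := by exact_mod_cast hn0
  have hE := hEpos n
  set x := E n / n with hx
  have hx0 : 0 < x := div_pos hE hn'
  have hEx : E n = n * x := by rw [hx]; field_simp
  set z := x ^ (ε / 8) with hz
  have hz0 : 0 < z := Real.rpow_pos_of_pos hx0 _
  have hz1 : z ≤ 1 := Real.rpow_le_one hx0.le (by linarith) (by positivity)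
  have hxz : x ≤ z := by
    have := Real.rpow_le_rpow_of_exponent_ge hx0 (by linarith) (by linarith : ε / 8 ≤ 1)
    rwa [Real.rpow_one] at this
  have hg : gfun E ε n = n * (x ^ 2 * z) := by
    rw [gfun, ← hx, Real.rpow_add hx0, Real.rpow_two]
  have hδ : 2 * gfun E ε n / E n = 2 * (x * z) := by
    rw [hg, hEx]; field_simp
  have hη : gfun E ε n / (2 * n) = x * (x * z) / 2 := by
    rw [hg]; field_simp
  rw [hδ, hη]
  set m := ⌈2 * (n : ℝ) / E n⌉₊ with hm
  have hmpos : 0 < m := Nat.ceil_pos.2 (by positivity)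
  have hmE : 2 * (n : ℝ) ≤ m * E n := (div_le_iff₀ hE).1 (Nat.le_ceil _)
  have hmx : (m : ℝ) * x ≤ 2 + x := by
    have h1 : (m : ℝ) ≤ 2 * n / E n + 1 := (Nat.ceil_lt_add_one (by positivity)).le
    calc (m : ℝ) * x ≤ (2 * n / E n + 1) * x := by gcongr
      _ = 2 + x := by rw [hEx]; field_simp
  have hxlg : 1 ≤ x * Real.log n := by
    have hlg0 : 0 < Real.log n := by linarith
    have h1 : n * Real.log n ^ (-(1 / 5 : ℝ) + ε) ≤ E n := by
      have := (le_div_iff₀ (by positivity)).1 hom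
      linarith
    have h2 : Real.log n ^ (-1 : ℝ) ≤ Real.log n ^ (-(1 / 5 : ℝ) + ε) :=
      Real.rpow_le_rpow_of_exponent_le hlg1 (by linarith)
    have h3 : Real.log n ^ (-1 : ℝ) ≤ x := by
      rw [hx, le_div_iff₀ hn']
      nlinarith
    rw [Real.rpow_neg_one] at h3
    calc 1 = (Real.log n)⁻¹ * Real.log n := by field_simp
      _ ≤ _ := by gcongr
  set L := -Real.log x with hL
  have hL0 : 0 ≤ L := by
    have := Real.log_nonpos hx0.le (by linarith : x ≤ 1)
    linarith
  have hLlg : L ≤ Real.log n := by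
    have h1 := Real.log_nonneg hxlg
    rw [Real.log_mul hx0.ne' (by linarith)] at h1
    have := Real.log_le_self (by linarith : 0 ≤ Real.log n)
    linarith
  have hxexp : Real.exp (-L) = x := by rw [hL, neg_neg, Real.exp_log hx0]
  have hxz1 : x * z ≤ 1 / 30 := by nlinarith
  -- the choice `θ = log (1 / x)` makes the cap size `exp (o(n / m))`; the spectral bound
  -- `δ - m η ≥ x z / 2` is weakened to `x ^ 4`, whose square root is `x ^ 2`
  have hUB := union_bound (l := x ^ 4) (θ := L) (t := (2 : ℝ) ^ (-(E n))) hn0 hmpos (I n) (hI n)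
    (δ := 2 * (x * z)) (η := x * (x * z) / 2) (by positivity) (by linarith) (by positivity)
    (by positivity) (pow_le_one₀ hx0.le (by linarith)) (by
      have h1 : (m : ℝ) * (x * (x * z) / 2) ≤ (2 + x) * (x * z) / 2 := by
        have : (m : ℝ) * (x * (x * z) / 2) = (m * x) * (x * z) / 2 := by ring
        rw [this]
        gcongr
      have h2 : x ^ 4 ≤ x * z * (1 / 2) := by
        have : x ^ 4 = x * x * x ^ 2 := by ring
        rw [this]
        gcongr
        nlinarith
      nlinarith [mul_pos hx0 hz0]) (by positivity) hL0
  refine hUB.trans (ENNReal.ofReal_le_ofReal ?_)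
  have hexp2 : Real.exp (-2 * L) = x ^ 2 := by
    rw [← hxexp, sq, ← Real.exp_add]; congr 1; ring
  have hsq : (2 : ℝ) ^ (-(E n)) / Real.sqrt (x ^ 4) =
      Real.exp (-(E n * Real.log 2) + 2 * L) := by
    have h1 : Real.sqrt (x ^ 4) = x ^ 2 := by
      rw [show x ^ 4 = (x ^ 2) ^ 2 by ring, Real.sqrt_sq (by positivity)]
    rw [h1, ← hexp2, Real.rpow_def_of_pos two_pos, ← Real.exp_sub]
    congr 1
    ring
  have hcard : ((I n).card : ℝ) ≤ Real.exp (K * Real.log n) := by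
    rw [Real.exp_nat_mul, Real.exp_log hn']
    exact_mod_cast hIcard n
  have h2n : (2 : ℝ) ^ n = Real.exp (n * Real.log 2) := by
    rw [Real.exp_nat_mul, Real.exp_log two_pos]
  rw [hexp2, hsq, h2n]
  calc _ ≤ Real.exp (n * Real.log 2) *
        Real.exp (n * (L * (2 * (x * z) + x * (x * z) / 2) + x ^ 2)) ^ m *
        Real.exp (K * Real.log n) ^ m *
        (Real.exp (m / 2) * Real.exp (-(E n * Real.log 2) + 2 * L) ^ m) :=
        mul_le_mul_of_nonneg_right
          (mul_le_mul_of_nonneg_left (pow_le_pow_left₀ (Nat.cast_nonneg _) hcard m)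
            (mul_nonneg (Real.exp_nonneg _) (pow_nonneg (Real.exp_nonneg _) m)))
          (mul_nonneg (Real.exp_nonneg _) (pow_nonneg (Real.exp_nonneg _) m))
    _ = Real.exp (n * Real.log 2 +
        m * (n * (L * (2 * (x * z) + x * (x * z) / 2) + x ^ 2)) + m * (K * Real.log n) +
        (m / 2 + m * (-(E n * Real.log 2) + 2 * L))) := by
      rw [← Real.exp_nat_mul, ← Real.exp_nat_mul, ← Real.exp_nat_mul, ← Real.exp_add,
        ← Real.exp_add, ← Real.exp_add, ← Real.exp_add]
    _ ≤ _ := by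
      rw [Real.exp_le_exp]
      exact exponent_le hn' (Nat.cast_nonneg _) hx0 hx30.le (by linarith) hxlg hz0.le hL0 hLlg
        (by rw [hL]; linarith) (Nat.cast_nonneg _) hlgn hmE
end

section
/- Fix ε ∈ (0,1) and a constant C > 0. Let X ∼ N(0, I_n), and let N_ε be the number of σ ∈ B_n such that (a) σ is a local optimum for X, and (b) n^{−1/2}|⟨σ, X⟩| ≤ C·2^{−nε}. Then lim_{n→∞} (1/n)·log₂ E[N_ε] = 1 − ε. -/
/-!
By linearity, `E[N_ε]` is the sum over the `2^n` spin vectors `σ` of the probability that `σ` is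
counted, and for fixed `σ` the variables `Y i = σ i * X i` are again i.i.d. standard Gaussians with
sum `S = ⟨σ, X⟩ ∼ N(0, n)`. Put `δ = C 2^{-nε}` and `t = √n δ`; each probability turns out to be of
order `δ`, so `E[N_ε]` is of order `2^n δ = C 2^{n(1-ε)}`.

*Upper bound.* Drop local optimality: `P(|S| ≤ t) ≤ 2δ`, as the density of `S` is at most `1/√n`.

*Lower bound.* Flipping coordinate `i` changes `S` to `S - 2 Y i`, so on `{|S| ≤ t}` the vector `σ`
is a local optimum as soon as every `|Y i| > t`. A failure at `i` forces `|Y i| ≤ t` and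
`|∑_{j ≠ i} Y j| ≤ 2t`. These events are independent and their joint probability is at most
`2t * 4t`. A union bound gives a total failure probability of at most `8 n t² = 8 n² δ²`
(`prob_good_ge`), negligible compared with `P(|S| ≤ t) ≥ c δ` because `δ` is exponentially small.
-/

open MeasureTheory ProbabilityTheory Filter

/-- The vector obtained from `σ` by flipping its `i`-th coordinate. -/
noncomputable def flipCoord {n : ℕ} (σ : Fin n → ℝ) (i : Fin n) : Fin n → ℝ :=
  fun k => if k = i then -σ k else σ k

/-- `σ` is a local optimum for the instance `X`: flipping any single coordinate
does not decrease `|⟨σ, X⟩|`. -/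
def isLocalOpt {n : ℕ} (X σ : Fin n → ℝ) : Prop :=
  ∀ i : Fin n, |ip σ X| ≤ |ip (flipCoord σ i) X|

/-- The spin configuration in `{-1,1}^n ⊂ ℝ^n` encoded by a Boolean vector. -/
noncomputable def spin {n : ℕ} (s : Fin n → Bool) : Fin n → ℝ :=
  fun i => if s i then 1 else -1

/-- The number of local optima of energy at most `C · 2^{-nε}`. -/
noncomputable def Neps (ε C : ℝ) (n : ℕ) (X : Fin n → ℝ) : ℕ :=
  Nat.card {s : Fin n → Bool //
    isLocalOpt X (spin s) ∧ |ip (spin s) X| / Real.sqrt n ≤ C * (2 : ℝ) ^ (-(n : ℝ) * ε)}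

open scoped NNReal

/-! ### Gaussian small-ball estimates -/

lemma gaussian_real_Icc_eq {v : ℝ≥0} (hv : v ≠ 0) (a : ℝ) :
    (gaussianReal 0 v).real (Set.Icc (-a) a) = ∫ x in Set.Icc (-a) a, gaussianPDFReal 0 v x := by
  rw [measureReal_def, gaussianReal_apply_eq_integral 0 hv, ENNReal.toReal_ofReal]
  exact integral_nonneg fun x => gaussianPDFReal_nonneg _ _ _

lemma gaussian_Icc_le {v : ℝ≥0} (hv : v ≠ 0) {a : ℝ} (ha : 0 ≤ a) :
    (gaussianReal 0 v).real (Set.Icc (-a) a) ≤ 2 * a / √(v : ℝ) := by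
  have hv' : (0 : ℝ) < v := by positivity
  rw [gaussian_real_Icc_eq hv]
  have h1 : ∀ x, gaussianPDFReal 0 v x ≤ (√(v : ℝ))⁻¹ := by
    intro x
    rw [gaussianPDFReal]
    have h2 : Real.exp (-(x - 0) ^ 2 / (2 * v)) ≤ 1 := by
      rw [Real.exp_le_one_iff]
      apply div_nonpos_of_nonpos_of_nonneg
      · nlinarith [sq_nonneg (x - 0)]
      · positivity
    have h3 : (√(2 * Real.pi * v))⁻¹ ≤ (√(v : ℝ))⁻¹ := by
      apply inv_anti₀ (by positivity)
      apply Real.sqrt_le_sqrt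
      nlinarith [Real.pi_gt_three]
    calc _ ≤ (√(2 * Real.pi * v))⁻¹ * 1 := by gcongr
      _ ≤ _ := by rwa [mul_one]
  calc ∫ x in Set.Icc (-a) a, gaussianPDFReal 0 v x
      ≤ ∫ x in Set.Icc (-a) a, (√(v : ℝ))⁻¹ :=
        integral_mono (integrable_gaussianPDFReal _ _).restrict (integrable_const _) h1
    _ = _ := by
        rw [setIntegral_const, Real.volume_real_Icc_of_le (by linarith), smul_eq_mul]
        ring

/-- The constant of the Gaussian lower bound: twice the standard normal density at `1`. -/
noncomputable def ballConst : ℝ := 2 * (√(2 * Real.pi))⁻¹ * Real.exp (-1 / 2)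

lemma ballConst_pos : 0 < ballConst := by
  unfold ballConst; positivity

lemma gaussian_Icc_ge {v : ℝ≥0} (hv : v ≠ 0) {a : ℝ} (ha : 0 ≤ a) (hav : a ≤ √(v : ℝ)) :
    ballConst * (a / √(v : ℝ)) ≤ (gaussianReal 0 v).real (Set.Icc (-a) a) := by
  have hv' : (0 : ℝ) < v := by positivity
  rw [gaussian_real_Icc_eq hv]
  have h1 : ∀ x ∈ Set.Icc (-a) a,
      (√(2 * Real.pi))⁻¹ * (√(v : ℝ))⁻¹ * Real.exp (-1 / 2) ≤ gaussianPDFReal 0 v x := by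
    intro x hx
    rw [gaussianPDFReal, Real.sqrt_mul (x := 2 * Real.pi) (by positivity), mul_inv]
    have hx2 : x ^ 2 ≤ v := by
      have h4 : |x| ≤ √(v : ℝ) := (abs_le.2 hx).trans hav
      rw [← sq_abs]
      exact (pow_le_pow_left₀ (abs_nonneg x) h4 2).trans_eq (Real.sq_sqrt hv'.le)
    refine mul_le_mul_of_nonneg_left (Real.exp_le_exp.2 ?_) (by positivity)
    rw [sub_zero, div_le_div_iff₀ (by norm_num) (by positivity)]
    linarith
  calc ballConst * (a / √(v : ℝ))
      = ∫ x in Set.Icc (-a) a, (√(2 * Real.pi))⁻¹ * (√(v : ℝ))⁻¹ * Real.exp (-1 / 2) := by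
        rw [setIntegral_const, Real.volume_real_Icc_of_le (by linarith), smul_eq_mul, ballConst]
        ring
    _ ≤ _ := setIntegral_mono_on (integrable_const _) (integrable_gaussianPDFReal _ _).restrict
        measurableSet_Icc h1

/-! ### Sums of independent standard Gaussians -/

section Indep

variable {Ω : Type*} [MeasurableSpace Ω] {μ : Measure Ω} [IsProbabilityMeasure μ] {n : ℕ}
  {Y : Fin n → Ω → ℝ}

lemma map_sum_gaussian (hm : ∀ i, Measurable (Y i)) (hI : iIndepFun Y μ)
    (hY : ∀ i, μ.map (Y i) = gaussianReal 0 1) (s : Finset (Fin n)) :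
    μ.map (∑ i ∈ s, Y i) = gaussianReal 0 (s.card : ℝ≥0) := by
  induction s using Finset.induction_on with
  | empty =>
    simp only [Finset.sum_empty, Finset.card_empty, Nat.cast_zero, gaussianReal_zero_var]
    exact (Measure.map_const μ (0 : ℝ)).trans (by simp)
  | insert i s hi ih =>
    rw [Finset.sum_insert hi, add_comm, Finset.card_insert_of_notMem hi]
    have := gaussianReal_add_gaussianReal_of_indepFun
      (hI.indepFun_finsetSum_of_notMem hm hi) ih (hY i)
    simpa using this

lemma prob_sum_eq (hm : ∀ i, Measurable (Y i)) (hI : iIndepFun Y μ)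
    (hY : ∀ i, μ.map (Y i) = gaussianReal 0 1) (s : Finset (Fin n)) (a : ℝ) :
    μ.real {ω | |∑ i ∈ s, Y i ω| ≤ a}
      = (gaussianReal 0 (s.card : ℝ≥0)).real (Set.Icc (-a) a) := by
  rw [← map_sum_gaussian hm hI hY s, map_measureReal_apply (by fun_prop) measurableSet_Icc]
  congr 1
  ext ω
  simp [abs_le]

lemma prob_sum_le (hm : ∀ i, Measurable (Y i)) (hI : iIndepFun Y μ)
    (hY : ∀ i, μ.map (Y i) = gaussianReal 0 1) {s : Finset (Fin n)} (hs : s.Nonempty) {a : ℝ}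
    (ha : 0 ≤ a) :
    μ.real {ω | |∑ i ∈ s, Y i ω| ≤ a} ≤ 2 * a / √(s.card : ℝ) := by
  rw [prob_sum_eq hm hI hY]
  simpa using gaussian_Icc_le (v := (s.card : ℝ≥0)) (by simpa using hs.ne_empty) ha

/-- The sum is small and one given summand is small: since the summand is independent of the sum of
the others, this is quadratically unlikely. -/
lemma prob_bad_le (hn : 2 ≤ n) (hm : ∀ i, Measurable (Y i)) (hI : iIndepFun Y μ)
    (hY : ∀ i, μ.map (Y i) = gaussianReal 0 1) (i : Fin n) {t : ℝ} (ht : 0 ≤ t) :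
    μ.real {ω | |∑ j, Y j ω| ≤ t ∧ |Y i ω| ≤ t} ≤ 8 * t ^ 2 := by
  set s : Finset (Fin n) := Finset.univ.erase i with hs
  have hcard : s.card = n - 1 := by simp [hs]
  have hsne : s.Nonempty := by rw [← Finset.card_pos]; omega
  have h1 : μ.real {ω | |∑ j ∈ s, Y j ω| ≤ 2 * t} ≤ 4 * t := by
    refine (prob_sum_le hm hI hY hsne (by positivity)).trans ?_
    have h1s : (1 : ℝ) ≤ √(s.card : ℝ) := by
      rw [Real.one_le_sqrt]
      exact_mod_cast hsne.card_pos
    rw [div_le_iff₀ (by linarith)]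
    nlinarith
  have h2 : μ.real {ω | |Y i ω| ≤ t} ≤ 2 * t := by
    simpa using prob_sum_le hm hI hY (Finset.singleton_nonempty i) ht
  have hind := hI.indepFun_finsetSum_of_notMem hm (Finset.notMem_erase i Finset.univ)
  have h3 := hind.measure_inter_preimage_eq_mul (Set.Icc (-(2 * t)) (2 * t)) (Set.Icc (-t) t)
    measurableSet_Icc measurableSet_Icc
  have e1 : (∑ j ∈ Finset.univ.erase i, Y j) ⁻¹' Set.Icc (-(2 * t)) (2 * t)
      = {ω | |∑ j ∈ s, Y j ω| ≤ 2 * t} := by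
    ext ω; simp [abs_le, hs]
  have e2 : Y i ⁻¹' Set.Icc (-t) t = {ω | |Y i ω| ≤ t} := by
    ext ω; simp [abs_le]
  rw [e1, e2] at h3
  have h4 : μ.real ({ω | |∑ j ∈ s, Y j ω| ≤ 2 * t} ∩ {ω | |Y i ω| ≤ t})
      = μ.real {ω | |∑ j ∈ s, Y j ω| ≤ 2 * t} * μ.real {ω | |Y i ω| ≤ t} := by
    simp only [measureReal_def, h3, ENNReal.toReal_mul]
  calc μ.real {ω | |∑ j, Y j ω| ≤ t ∧ |Y i ω| ≤ t}
      ≤ μ.real ({ω | |∑ j ∈ s, Y j ω| ≤ 2 * t} ∩ {ω | |Y i ω| ≤ t}) := by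
        refine measureReal_mono ?_
        rintro ω ⟨ha, hb⟩
        refine ⟨?_, hb⟩
        have := Finset.add_sum_erase Finset.univ (fun j => Y j ω) (Finset.mem_univ i)
        simp only [Set.mem_ofPred_eq]
        rw [abs_le] at *
        constructor <;> linarith
    _ = _ := h4
    _ ≤ (4 * t) * (2 * t) := by gcongr
    _ = _ := by ring

lemma prob_good_ge (hn : 2 ≤ n) (hm : ∀ i, Measurable (Y i)) (hI : iIndepFun Y μ)
    (hY : ∀ i, μ.map (Y i) = gaussianReal 0 1) {δ : ℝ} (hδ : 0 ≤ δ) (hδ1 : δ ≤ 1) :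
    ballConst * δ - 8 * (n : ℝ) ^ 2 * δ ^ 2
      ≤ μ.real {ω | |∑ j, Y j ω| ≤ √(n : ℝ) * δ ∧ ∀ i, √(n : ℝ) * δ < |Y i ω|} := by
  have hn0 : (0 : ℝ) < n := by exact_mod_cast (by omega : 0 < n)
  have hsq : 0 < √(n : ℝ) := by positivity
  set t := √(n : ℝ) * δ with ht
  have ht0 : 0 ≤ t := by positivity
  have h1 : ballConst * δ ≤ μ.real {ω | |∑ j, Y j ω| ≤ t} := by
    rw [prob_sum_eq hm hI hY]
    have := gaussian_Icc_ge (v := ((Finset.univ : Finset (Fin n)).card : ℝ≥0)) (a := t)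
      (by simp; omega) ht0 (by simp [ht]; nlinarith)
    refine le_trans (le_of_eq ?_) this
    simp only [Finset.card_univ, Fintype.card_fin, NNReal.coe_natCast, ht]
    field_simp
  have h2 : μ.real {ω | |∑ j, Y j ω| ≤ t}
      ≤ μ.real {ω | |∑ j, Y j ω| ≤ t ∧ ∀ i, t < |Y i ω|}
        + ∑ i, μ.real {ω | |∑ j, Y j ω| ≤ t ∧ |Y i ω| ≤ t} := by
    calc _ ≤ μ.real ({ω | |∑ j, Y j ω| ≤ t ∧ ∀ i, t < |Y i ω|}
          ∪ ⋃ i, {ω | |∑ j, Y j ω| ≤ t ∧ |Y i ω| ≤ t}) := by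
          refine measureReal_mono ?_
          intro ω hω
          by_cases h : ∀ i, t < |Y i ω|
          · exact Or.inl ⟨hω, h⟩
          · push Not at h
            obtain ⟨i, hi⟩ := h
            exact Or.inr (Set.mem_iUnion.2 ⟨i, hω, hi⟩)
      _ ≤ _ := (measureReal_union_le _ _).trans
          (add_le_add le_rfl (measureReal_iUnion_fintype_le _))
  have h3 : ∑ i, μ.real {ω | |∑ j, Y j ω| ≤ t ∧ |Y i ω| ≤ t} ≤ 8 * (n : ℝ) ^ 2 * δ ^ 2 := by
    calc _ ≤ ∑ _i : Fin n, 8 * t ^ 2 :=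
          Finset.sum_le_sum fun i _ => prob_bad_le hn hm hI hY i ht0
      _ = _ := by
          rw [Finset.sum_const, Finset.card_univ, Fintype.card_fin, nsmul_eq_mul, ht, mul_pow,
            Real.sq_sqrt hn0.le]
          ring
  linarith

end Indep

/-! ### The event that a spin vector is counted -/

instance instProbStdGaussian (n : ℕ) : IsProbabilityMeasure (_root_.stdGaussian n) := by
  unfold _root_.stdGaussian; infer_instance

/-- The set of instances `X` for which the spin vector of `s` is counted by `Neps`. -/
def goodSet (ε C : ℝ) (n : ℕ) (s : Fin n → Bool) : Set (Fin n → ℝ) :=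
  {X | isLocalOpt X (spin s) ∧
    |ip (spin s) X| / Real.sqrt n ≤ C * (2 : ℝ) ^ (-(n : ℝ) * ε)}

lemma measurableSet_goodSet (ε C : ℝ) (n : ℕ) (s : Fin n → Bool) :
    MeasurableSet (goodSet ε C n s) := by
  have hc : ∀ σ : Fin n → ℝ, Measurable fun X => |ip σ X| := by
    intro σ
    unfold ip
    fun_prop
  apply MeasurableSet.inter
  · have h : {X | isLocalOpt X (spin s)}
        = ⋂ i, {X | |ip (spin s) X| ≤ |ip (flipCoord (spin s) i) X|} := by
      ext X; simp [isLocalOpt]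
    change MeasurableSet {X | isLocalOpt X (spin s)}
    rw [h]
    exact MeasurableSet.iInter fun i => measurableSet_le (hc _) (hc _)
  · exact measurableSet_le ((hc _).div_const _) measurable_const

lemma integral_Neps (ε C : ℝ) (n : ℕ) :
    ∫ X, (Neps ε C n X : ℝ) ∂(_root_.stdGaussian n)
      = ∑ s : Fin n → Bool, (_root_.stdGaussian n).real (goodSet ε C n s) := by
  have h : ∀ X, (Neps ε C n X : ℝ)
      = ∑ s : Fin n → Bool, (goodSet ε C n s).indicator (fun _ => (1 : ℝ)) X := by
    intro X
    classical
    simp only [Set.indicator_apply, Finset.sum_boole]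
    rw [Neps, Nat.card_eq_fintype_card, Fintype.card_subtype]
    refine congrArg _ (congrArg _ ?_)
    ext s
    simp [goodSet]
  simp_rw [h]
  rw [integral_finsetSum]
  · refine Finset.sum_congr rfl fun s _ => ?_
    rw [integral_indicator_const _ (measurableSet_goodSet ε C n s)]
    simp
  · intro s _
    exact (integrable_const (1 : ℝ)).indicator (measurableSet_goodSet ε C n s)

lemma spin_mul_iIndep {n : ℕ} (s : Fin n → Bool) :
    iIndepFun (fun i (X : Fin n → ℝ) => spin s i * X i) (_root_.stdGaussian n) :=
  iIndepFun_pi (X := fun i (x : ℝ) => spin s i * x) fun i => by fun_prop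

lemma spin_mul_law {n : ℕ} (s : Fin n → Bool) (i : Fin n) :
    (_root_.stdGaussian n).map (fun X => spin s i * X i) = gaussianReal 0 1 := by
  have h1 : (_root_.stdGaussian n).map (Function.eval i) = gaussianReal 0 1 :=
    (measurePreserving_eval (fun _ : Fin n => gaussianReal 0 1) i).map_eq
  have h2 : (fun X : Fin n → ℝ => spin s i * X i) = (spin s i * ·) ∘ Function.eval i := rfl
  rw [h2, ← Measure.map_map (by fun_prop) (by fun_prop), h1, gaussianReal_map_const_mul]
  have h3 : spin s i ^ 2 = 1 := by unfold spin; split_ifs <;> norm_num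
  congr 1
  · simp
  · ext; simp [h3]

lemma ip_flip {n : ℕ} (σ X : Fin n → ℝ) (i : Fin n) :
    ip (flipCoord σ i) X = ip σ X - 2 * (σ i * X i) := by
  have h : ∀ k, flipCoord σ i k * X k = σ k * X k - if k = i then 2 * (σ k * X k) else 0 := by
    intro k
    unfold flipCoord
    split_ifs <;> ring
  simp [ip, h, Finset.sum_sub_distrib]

lemma prob_goodSet_le (ε : ℝ) {C : ℝ} (hC : 0 < C) {n : ℕ} (hn : 2 ≤ n) (s : Fin n → Bool) :
    (_root_.stdGaussian n).real (goodSet ε C n s) ≤ 2 * (C * (2 : ℝ) ^ (-(n : ℝ) * ε)) := by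
  have hn0 : (0 : ℝ) < n := by exact_mod_cast (by omega : 0 < n)
  have hsq : 0 < √(n : ℝ) := by positivity
  set δ := C * (2 : ℝ) ^ (-(n : ℝ) * ε) with hδ
  have hδ0 : 0 < δ := by positivity
  have : Nonempty (Fin n) := ⟨⟨0, by omega⟩⟩
  calc _ ≤ (_root_.stdGaussian n).real {X | |∑ i, spin s i * X i| ≤ √(n : ℝ) * δ} := by
        refine measureReal_mono ?_
        rintro X ⟨-, h⟩
        rw [div_le_iff₀ hsq, mul_comm] at h
        exact h
    _ ≤ 2 * (√(n : ℝ) * δ) / √(((Finset.univ : Finset (Fin n)).card : ℕ) : ℝ) :=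
        prob_sum_le (fun i => by fun_prop) (spin_mul_iIndep s) (spin_mul_law s)
          Finset.univ_nonempty (by positivity)
    _ = _ := by
        rw [Finset.card_univ, Fintype.card_fin]
        field_simp

lemma prob_goodSet_ge (ε : ℝ) {C : ℝ} (hC : 0 < C) {n : ℕ} (hn : 2 ≤ n) (s : Fin n → Bool)
    (h1 : C * (2 : ℝ) ^ (-(n : ℝ) * ε) ≤ 1)
    (h2 : 8 * (n : ℝ) ^ 2 * (C * (2 : ℝ) ^ (-(n : ℝ) * ε)) ≤ ballConst / 2) :
    ballConst / 2 * (C * (2 : ℝ) ^ (-(n : ℝ) * ε))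
      ≤ (_root_.stdGaussian n).real (goodSet ε C n s) := by
  have hn0 : (0 : ℝ) < n := by exact_mod_cast (by omega : 0 < n)
  have hsq : 0 < √(n : ℝ) := by positivity
  set δ := C * (2 : ℝ) ^ (-(n : ℝ) * ε) with hδ
  have hδ0 : 0 < δ := by positivity
  have key := prob_good_ge hn (fun i => by fun_prop) (spin_mul_iIndep s) (spin_mul_law s)
    hδ0.le h1
  calc ballConst / 2 * δ ≤ ballConst * δ - 8 * (n : ℝ) ^ 2 * δ ^ 2 := by nlinarith
    _ ≤ _ := key
    _ ≤ _ := by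
      refine measureReal_mono ?_
      rintro X ⟨ha, hb⟩
      change |ip (spin s) X| ≤ √(n : ℝ) * δ at ha
      refine ⟨fun i => ?_, ?_⟩
      · rw [ip_flip]
        have hbi := hb i
        -- `|S - 2 Y i| ≥ 2 |Y i| - |S| ≥ |S|` since `|Y i| > √n δ ≥ |S|`
        have h3 := abs_sub_abs_le_abs_sub (2 * (spin s i * X i)) (ip (spin s) X)
        rw [abs_sub_comm, abs_mul 2, abs_two] at h3
        linarith
      · rw [div_le_iff₀ hsq, mul_comm]
        exact ha

/-! ### The exponential growth rate -/

/-- A sequence squeezed between two positive multiples of `2 ^ (n * r)` has growth rate `r`. -/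
lemma tendsto_rate {E : ℕ → ℝ} {r K₁ K₂ : ℝ} (hK₁ : 0 < K₁) (hK₂ : 0 < K₂)
    (h : ∀ᶠ n : ℕ in atTop, K₁ * (2 : ℝ) ^ ((n : ℝ) * r) ≤ E n ∧
      E n ≤ K₂ * (2 : ℝ) ^ ((n : ℝ) * r)) :
    Tendsto (fun n : ℕ => (1 / (n : ℝ)) * Real.logb 2 (E n)) atTop (nhds r) := by
  have lim : ∀ K : ℝ, Tendsto (fun n : ℕ => Real.logb 2 K / (n : ℝ) + r) atTop (nhds r) := by
    intro K
    simpa using (tendsto_const_div_atTop_nhds_zero_nat (Real.logb 2 K)).add_const r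
  have hlog : ∀ K : ℝ, 0 < K → ∀ n : ℕ, 0 < n →
      (1 / (n : ℝ)) * Real.logb 2 (K * (2 : ℝ) ^ ((n : ℝ) * r)) = Real.logb 2 K / n + r := by
    intro K hK n hn
    have hn0 : (0 : ℝ) < n := by exact_mod_cast hn
    rw [Real.logb_mul hK.ne' (by positivity), Real.logb_rpow (by norm_num) (by norm_num)]
    field_simp
  refine tendsto_of_tendsto_of_tendsto_of_le_of_le' (lim K₁) (lim K₂) ?_ ?_
  · filter_upwards [h, eventually_gt_atTop 0] with n hn hpos
    rw [← hlog K₁ hK₁ n hpos]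
    have := Real.logb_le_logb_of_le (b := 2) (by norm_num) (by positivity) hn.1
    gcongr
  · filter_upwards [h, eventually_gt_atTop 0] with n hn hpos
    rw [← hlog K₂ hK₂ n hpos]
    have hE : 0 < E n := lt_of_lt_of_le (by positivity) hn.1
    have := Real.logb_le_logb_of_le (b := 2) (by norm_num) hE hn.2
    gcongr

lemma tendsto_poly_mul_energy {ε : ℝ} (hε : 0 < ε) (C : ℝ) (k : ℕ) :
    Tendsto (fun n : ℕ => (n : ℝ) ^ k * (C * (2 : ℝ) ^ (-(n : ℝ) * ε))) atTop (nhds 0) := by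
  have hr : (2 : ℝ) ^ (-ε) < 1 := Real.rpow_lt_one_of_one_lt_of_neg (by norm_num) (by linarith)
  have h := (tendsto_pow_const_mul_const_pow_of_lt_one k (by positivity) hr).const_mul C
  rw [mul_zero] at h
  refine h.congr fun n => ?_
  rw [← Real.rpow_natCast ((2 : ℝ) ^ (-ε)) n, ← Real.rpow_mul (by norm_num),
    show -ε * (n : ℝ) = -(n : ℝ) * ε by ring]
  ring

/-- The expected number of local optima below energy `C·2^{-nε}` has exponential
growth rate `1 - ε`. -/
theorem expected_local_optima (ε : ℝ) (hε0 : 0 < ε) (hε1 : ε < 1) (C : ℝ) (hC : 0 < C) :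
    Tendsto (fun n : ℕ =>
      (1 / (n : ℝ)) * Real.logb 2 (∫ X, (Neps ε C n X : ℝ) ∂(stdGaussian n)))
      atTop (nhds (1 - ε)) := by
  have hc := ballConst_pos
  refine tendsto_rate (K₁ := ballConst / 2 * C) (K₂ := 2 * C) (by positivity) (by positivity) ?_
  have e1 : ∀ᶠ n : ℕ in atTop, C * (2 : ℝ) ^ (-(n : ℝ) * ε) ≤ 1 := by
    filter_upwards [(tendsto_poly_mul_energy hε0 C 0).eventually_le_const one_pos] with n hn
    simpa using hn
  have e2 : ∀ᶠ n : ℕ in atTop,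
      8 * (n : ℝ) ^ 2 * (C * (2 : ℝ) ^ (-(n : ℝ) * ε)) ≤ ballConst / 2 := by
    filter_upwards [(tendsto_poly_mul_energy hε0 C 2).eventually_le_const
      (show 0 < ballConst / 16 by positivity)] with n hn
    linarith
  filter_upwards [e1, e2, eventually_ge_atTop 2] with n h1 h2 hn
  have hpow : ∀ K : ℝ, K * C * (2 : ℝ) ^ ((n : ℝ) * (1 - ε))
      = ∑ _s : Fin n → Bool, K * (C * (2 : ℝ) ^ (-(n : ℝ) * ε)) := by
    intro K
    rw [Finset.sum_const, Finset.card_univ, nsmul_eq_mul,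
      show (n : ℝ) * (1 - ε) = n + -(n : ℝ) * ε by ring, Real.rpow_add (by norm_num),
      Real.rpow_natCast]
    simp
    ring
  rw [integral_Neps, hpow, hpow]
  exact ⟨Finset.sum_le_sum fun s _ => prob_goodSet_ge ε hC hn s h1 h2,
    Finset.sum_le_sum fun s _ => prob_goodSet_le ε hC hn s⟩
end

section
/- Fix ε ∈ (1/2, 1) and a sequence (β_n) with β_n ≥ n·2^{nε}. With ρ ∈ (0,1) as furnished by the free-energy-well theorem, the following holds: for every δ > 0, with probability tending to 1 as n → ∞ (over X ∼ N(0, I_n)), π_{β_n}(I₁ ∪ {−σ*}) ≥ 1/2 − δ. -/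
/-!
Write `τ = 2 ^ (-n ε)`. Two events hold with probability tending to `1`.

* No two sign vectors at Hamming distance `1 ≤ k ≤ κ n` both have energy at most `2 τ`
  (`tendsto_prob_close_pair`). This is a union bound: for small `κ` there are at most
  `2 ^ n * 2 ^ (n (ε - 1/2))` such pairs, and each one is bad with probability at most `4 n τ ^ 2`.
* At least three sign vectors have energy at most `τ / 4` (`tendsto_prob_few`). This is the second
  moment method. For a pair at distance `k`, the two inner products are `U + V` and `U - V` with `U`,
  `V` independent Gaussians of variances `n - k` and `k`, so the joint event is that `(U, V)` lies in
  the diamond `|u| + |v| ≤ b`, where `b = τ √n / 4`. Its probability is at most the area `2 b ^ 2` times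
  the maximal density (`prob_pair_le`). Averaging over pairs gives the square of the first moment up to
  a factor `1 + O(1 / n)` (`sum_choose_inv_sqrt`).

On both events, with `ρ = 1 - 2 κ`, the minimizer `σ*` has energy at most `τ / 4`, all of `I₂` has energy
above `2 τ`, and a third low-energy vector, being different from `± σ*` and far from both, lies in `I₁`.
As `β τ ≥ n`, this energy gap beats the entropy of `I₂`, which yields the free-energy well with `c = 1 / 4`
(`well_of_good`). The well gives `π(I₂) ≤ exp (-n / 4)`, and the symmetry `σ ↦ -σ` gives
`π(I₁ ∪ {-σ*}) ≥ 1/2 - π(I₂)` (`mass_ge_half_sub`).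
-/

open MeasureTheory ProbabilityTheory Filter

/-- The Gibbs weight `exp(-β·H(σ))` with `H(σ) = |⟨σ, X⟩|/√n`. -/
noncomputable def gibbsWeight (n : ℕ) (b : ℝ) (X : Fin n → ℝ) (s : Fin n → Bool) : ℝ :=
  Real.exp (-b * (|ip (spin s) X| / Real.sqrt n))

/-- The partition function `Z_β`. -/
noncomputable def gibbsZ (n : ℕ) (b : ℝ) (X : Fin n → ℝ) : ℝ :=
  ∑ s : Fin n → Bool, gibbsWeight n b X s

open Classical in
/-- The Gibbs probability `π_β(S)` of a set `S` of spin configurations. -/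
noncomputable def gibbsProb (n : ℕ) (b : ℝ) (X : Fin n → ℝ) (S : Set (Fin n → ℝ)) : ℝ :=
  (∑ s : Fin n → Bool, if spin s ∈ S then gibbsWeight n b X s else 0) / gibbsZ n b X

/-- The set `I₁ = {σ ∈ B_n : -ρ ≤ ⟨σ,σ*⟩/n ≤ ρ}`. -/
def setI1 (n : ℕ) (ρ : ℝ) (σs : Fin n → ℝ) : Set (Fin n → ℝ) :=
  {σ | isCube σ ∧ -ρ ≤ ip σ σs / n ∧ ip σ σs / n ≤ ρ}

/-- The set `I₂ = {σ ∈ B_n : ρ ≤ ⟨σ,σ*⟩/n ≤ (n-2)/n}`. -/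
def setI2 (n : ℕ) (ρ : ℝ) (σs : Fin n → ℝ) : Set (Fin n → ℝ) :=
  {σ | isCube σ ∧ ρ ≤ ip σ σs / n ∧ ip σ σs / n ≤ ((n : ℝ) - 2) / n}

/-! ### Signed sums of Gaussian coordinates -/

instance stdGaussian_prob (n : ℕ) : IsProbabilityMeasure (_root_.stdGaussian n) := by
  unfold _root_.stdGaussian; infer_instance

lemma iIndepFun_coords (n : ℕ) (c : Fin n → ℝ) :
    iIndepFun (fun i (X : Fin n → ℝ) => c i * X i) (_root_.stdGaussian n) := by
  unfold _root_.stdGaussian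
  exact iIndepFun_pi (X := fun i x => c i * x) (fun i => by fun_prop)

lemma map_signed_coord (n : ℕ) (c : Fin n → ℝ) (hc : ∀ i, c i ^ 2 = 1) (i : Fin n) :
    (_root_.stdGaussian n).map (fun X => c i * X i) = gaussianReal 0 1 := by
  have h1 : (_root_.stdGaussian n).map (Function.eval i) = gaussianReal 0 1 := by
    unfold _root_.stdGaussian
    exact (measurePreserving_eval (fun _ => gaussianReal 0 1) i).map_eq
  have h2 : (fun X : Fin n → ℝ => c i * X i) = (fun x => c i * x) ∘ Function.eval i := rfl
  rw [h2, ← Measure.map_map (by fun_prop) (by fun_prop), h1, gaussianReal_map_const_mul]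
  congr 1
  · simp
  · ext; simp [hc]

lemma map_signed_sum (n : ℕ) (c : Fin n → ℝ) (hc : ∀ i, c i ^ 2 = 1) (A : Finset (Fin n)) :
    (_root_.stdGaussian n).map (fun X => ∑ i ∈ A, c i * X i) = gaussianReal 0 A.card := by
  classical
  induction A using Finset.induction_on with
  | empty => simp [Measure.map_const]
  | insert a A ha ih =>
    have hind : IndepFun (∑ i ∈ A, fun X : Fin n → ℝ => c i * X i) (fun X => c a * X a) (_root_.stdGaussian n) :=
      (iIndepFun_coords n c).indepFun_finsetSum_of_notMem (fun i => by fun_prop) ha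
    have hs : (∑ i ∈ A, fun X : Fin n → ℝ => c i * X i) = fun X => ∑ i ∈ A, c i * X i := by
      ext X; simp
    rw [hs] at hind
    have := gaussianReal_add_gaussianReal_of_indepFun hind ih (map_signed_coord n c hc a)
    rw [Finset.card_insert_of_notMem ha]
    convert this using 1
    · congr 1
      ext X; simp [Finset.sum_insert ha, add_comm]
    · push_cast; simp

lemma map_signed_pair (n : ℕ) (c : Fin n → ℝ) (hc : ∀ i, c i ^ 2 = 1) (A B : Finset (Fin n))
    (h : Disjoint A B) :
    (_root_.stdGaussian n).map (fun X => (∑ i ∈ A, c i * X i, ∑ i ∈ B, c i * X i)) =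
      (gaussianReal 0 A.card).prod (gaussianReal 0 B.card) := by
  have hind := (iIndepFun_coords n c).indepFun_finset A B h (fun i => by fun_prop)
  have h2 := hind.comp (φ := fun v => ∑ i : A, v i) (ψ := fun v => ∑ i : B, v i)
    (by fun_prop) (by fun_prop)
  have e : ∀ A : Finset (Fin n), ((fun v : A → ℝ => ∑ i : A, v i) ∘ fun (X : Fin n → ℝ) (i : A) => c i * X i)
      = fun X => ∑ i ∈ A, c i * X i := by
    intro A; ext X
    simp only [Function.comp]
    exact Finset.sum_coe_sort A (fun i => c i * X i)
  have h3 : IndepFun (fun X : Fin n → ℝ => ∑ i ∈ A, c i * X i) (fun X => ∑ i ∈ B, c i * X i) (_root_.stdGaussian n) := by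
    rw [← e A, ← e B]; exact h2
  rw [indepFun_iff_map_prod_eq_prod_map_map (Measurable.aemeasurable (by fun_prop))
    (Measurable.aemeasurable (by fun_prop))] at h3
  rw [h3, map_signed_sum n c hc, map_signed_sum n c hc]

lemma gaussianReal_le (k : ℕ) (hk : 0 < k) :
    gaussianReal 0 (k : NNReal) ≤ ENNReal.ofReal ((√(2 * Real.pi * k))⁻¹) • volume := by
  rw [gaussianReal_of_var_ne_zero _ (by positivity), ← withDensity_const]
  apply withDensity_mono
  filter_upwards with x
  unfold gaussianPDF gaussianPDFReal
  apply ENNReal.ofReal_le_ofReal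
  simp only [NNReal.coe_natCast]
  have : Real.exp (-(x - 0) ^ 2 / (2 * (k:ℝ))) ≤ 1 := by
    rw [Real.exp_le_one_iff]
    apply div_nonpos_of_nonpos_of_nonneg
    · nlinarith [sq_nonneg (x-0)]
    · positivity
  have h0 : 0 ≤ (√(2 * Real.pi * k))⁻¹ := by positivity
  nlinarith

/-- Equality holds, but only the upper bound is used. -/
lemma volume_diamond (a : ℝ) (ha : 0 ≤ a) :
    (volume : Measure (ℝ × ℝ)) {p | |p.1| + |p.2| ≤ a} ≤ ENNReal.ofReal (2 * a ^ 2) := by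
  have hm : MeasurableSet {p : ℝ × ℝ | |p.1| + |p.2| ≤ a} :=
    measurableSet_le (by fun_prop) (by fun_prop)
  have hI : ∫ x in -a..a, 2 * (a - |x|) = 2 * a ^ 2 := by
    have h1 : ∫ x in (0:ℝ)..a, 2 * (a - |x|) = a ^ 2 := by
      have : ∫ x in (0:ℝ)..a, 2 * (a - |x|) = ∫ x in (0:ℝ)..a, 2 * (a - x) := by
        apply intervalIntegral.integral_congr
        intro x hx
        rw [Set.uIcc_of_le ha] at hx
        simp [abs_of_nonneg hx.1]
      rw [this, intervalIntegral.integral_const_mul, intervalIntegral.integral_sub (by simp) (by simp)]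
      simp; ring
    have h2 : ∫ x in (-a)..0, 2 * (a - |x|) = a ^ 2 := by
      have := intervalIntegral.integral_comp_neg (a := 0) (b := a) (fun x => 2 * (a - |x|))
      simp only [abs_neg, neg_zero] at this
      rw [← this, h1]
    rw [← intervalIntegral.integral_add_adjacent_intervals (b := 0), h1, h2]
    · ring
    · exact Continuous.intervalIntegrable (by fun_prop) _ _
    · exact Continuous.intervalIntegrable (by fun_prop) _ _
  rw [Measure.volume_eq_prod, Measure.prod_apply hm]
  have : ∀ x : ℝ, (volume : Measure ℝ) (Prod.mk x ⁻¹' {p : ℝ × ℝ | |p.1| + |p.2| ≤ a}) ≤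
      (Set.Icc (-a) a).indicator (fun x => ENNReal.ofReal (2 * (a - |x|))) x := by
    intro x
    by_cases hx : x ∈ Set.Icc (-a) a
    · rw [Set.indicator_of_mem hx]
      calc _ ≤ volume (Set.Icc (-(a - |x|)) (a - |x|)) := by
            apply measure_mono
            intro y hy
            simp only [Set.mem_preimage, Set.mem_ofPred_eq] at hy
            rw [Set.mem_Icc, ← abs_le]; linarith
        _ = _ := by rw [Real.volume_Icc]; congr 1; ring
    · rw [Set.indicator_of_notMem hx]
      have : Prod.mk x ⁻¹' {p : ℝ × ℝ | |p.1| + |p.2| ≤ a} = ∅ := by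
        ext y
        simp only [Set.mem_preimage, Set.mem_ofPred_eq, Set.mem_empty_iff_false, iff_false, not_le]
        by_contra hc
        push Not at hc
        exact hx (Set.mem_Icc.2 (abs_le.1 (by linarith [abs_nonneg y])))
      rw [this]; simp
  refine (lintegral_mono this).trans ?_
  rw [lintegral_indicator measurableSet_Icc, ← ofReal_integral_eq_lintegral_ofReal]
  · rw [integral_Icc_eq_integral_Ioc, ← intervalIntegral.integral_of_le (by linarith), hI]
  · exact (Continuous.continuousOn (by fun_prop)).integrableOn_Icc
  · filter_upwards [ae_restrict_mem measurableSet_Icc] with x hx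
    have := abs_le.2 hx
    simp; linarith

lemma prod_gauss_diamond (j k : ℕ) (hj : 0 < j) (hk : 0 < k) (a : ℝ) (ha : 0 ≤ a) :
    ((gaussianReal 0 (j : NNReal)).prod (gaussianReal 0 (k : NNReal))) {p | |p.1| + |p.2| ≤ a} ≤
      ENNReal.ofReal (a ^ 2 / (Real.pi * √(j * k))) := by
  have h := Measure.prod_mono (gaussianReal_le j hj) (gaussianReal_le k hk)
  refine (h _).trans ?_
  rw [Measure.prod_smul_left, Measure.prod_smul_right, Measure.smul_apply, Measure.smul_apply,
    smul_eq_mul, smul_eq_mul, ← Measure.volume_eq_prod]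
  calc _ ≤ ENNReal.ofReal ((√(2 * Real.pi * j))⁻¹) * (ENNReal.ofReal ((√(2 * Real.pi * k))⁻¹) *
        ENNReal.ofReal (2 * a ^ 2)) := by gcongr; exact volume_diamond a ha
    _ = _ := by
      rw [← ENNReal.ofReal_mul (by positivity), ← ENNReal.ofReal_mul (by positivity)]
      congr 1
      have hp := Real.pi_pos
      have : √(2 * Real.pi * j) * √(2 * Real.pi * k) = 2 * Real.pi * √(j * k) := by
        rw [← Real.sqrt_mul (by positivity)]
        rw [show 2 * Real.pi * j * (2 * Real.pi * k) = (2 * Real.pi) ^ 2 * (j * k) by ring,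
          Real.sqrt_mul (by positivity), Real.sqrt_sq (by positivity)]
      rw [← mul_assoc, ← mul_inv, this]
      have : 0 < √((j:ℝ) * k) := by positivity
      field_simp

/-! ### One- and two-point probabilities -/

lemma spin_sq {n : ℕ} (s : Fin n → Bool) (i : Fin n) : spin s i ^ 2 = 1 := by
  unfold spin; split_ifs <;> norm_num

lemma measurable_ip_spin {n : ℕ} (s : Fin n → Bool) :
    Measurable fun X : Fin n → ℝ => ip (spin s) X := by
  unfold ip; fun_prop

lemma measurableSet_ip_le {n : ℕ} (s : Fin n → Bool) (a : ℝ) :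
    MeasurableSet {X : Fin n → ℝ | |ip (spin s) X| ≤ a} :=
  measurableSet_le (measurable_ip_spin s).abs measurable_const

/-- Let `U` and `V` be the parts of `⟨s, X⟩` over the coordinates where `s` and `t` agree, respectively
differ. Then `⟨s, X⟩ = U + V` and `⟨t, X⟩ = U - V`, so the event is `|U| + |V| ≤ a`, with `U`, `V`
independent centred Gaussians of variances `n - k` and `k`, where `k` is the Hamming distance. -/
lemma prob_pair_le {n : ℕ} (s t : Fin n → Bool) (h0 : 0 < hammingDist s t)
    (h1 : hammingDist s t < n) (a : ℝ) (ha : 0 ≤ a) :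
    (_root_.stdGaussian n).real ({X | |ip (spin s) X| ≤ a} ∩ {X | |ip (spin t) X| ≤ a}) ≤
      a ^ 2 / (Real.pi * √(((n - hammingDist s t : ℕ) : ℝ) * (hammingDist s t : ℝ))) := by
  classical
  set D : Finset (Fin n) := Finset.univ.filter fun i => s i ≠ t i with hD
  have hDc : D.card = hammingDist s t := rfl
  have hAc : Dᶜ.card = n - hammingDist s t := by rw [Finset.card_compl, hDc]; simp
  have hs : ∀ X, ip (spin s) X = ∑ i ∈ Dᶜ, spin s i * X i + ∑ i ∈ D, spin s i * X i := by
    intro X; unfold ip; rw [Finset.sum_compl_add_sum]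
  have ht : ∀ X, ip (spin t) X = ∑ i ∈ Dᶜ, spin s i * X i - ∑ i ∈ D, spin s i * X i := by
    intro X; unfold ip
    rw [← Finset.sum_compl_add_sum D, sub_eq_add_neg, ← Finset.sum_neg_distrib]
    congr 1
    · apply Finset.sum_congr rfl
      intro i hi
      simp only [hD, Finset.mem_compl, Finset.mem_filter, Finset.mem_univ, true_and, not_not] at hi
      simp [spin, hi]
    · apply Finset.sum_congr rfl
      intro i hi
      simp only [hD, Finset.mem_filter, Finset.mem_univ, true_and] at hi
      unfold spin
      cases hsi : s i <;> cases hti : t i <;> simp_all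
  have hset : ({X | |ip (spin s) X| ≤ a} ∩ {X | |ip (spin t) X| ≤ a}) ⊆
      (fun X => (∑ i ∈ Dᶜ, spin s i * X i, ∑ i ∈ D, spin s i * X i)) ⁻¹'
        {p : ℝ × ℝ | |p.1| + |p.2| ≤ a} := by
    rintro X ⟨h1, h2⟩
    simp only [Set.mem_ofPred_eq, hs, ht, Set.mem_preimage] at h1 h2 ⊢
    rw [abs_le] at h1 h2
    rcases abs_cases (∑ i ∈ Dᶜ, spin s i * X i) with h | h <;>
      rcases abs_cases (∑ i ∈ D, spin s i * X i) with h' | h' <;> linarith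
  have hm : MeasurableSet {p : ℝ × ℝ | |p.1| + |p.2| ≤ a} :=
    measurableSet_le (by fun_prop) (by fun_prop)
  refine ENNReal.toReal_le_of_le_ofReal (by positivity) ?_
  refine (measure_mono hset).trans ?_
  rw [← Measure.map_apply (by fun_prop) hm, map_signed_pair n _ (spin_sq s) _ _ disjoint_compl_left,
    hAc, hDc]
  exact prod_gauss_diamond _ _ (by omega) h0 a ha

lemma prob_single {n : ℕ} (s : Fin n → Bool) (b : ℝ) :
    (_root_.stdGaussian n).real {X | |ip (spin s) X| ≤ b} =
      (gaussianReal 0 (n : NNReal)).real (Set.Icc (-b) b) := by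
  have h : {X : Fin n → ℝ | |ip (spin s) X| ≤ b} =
      (fun X => ∑ i ∈ Finset.univ, spin s i * X i) ⁻¹' Set.Icc (-b) b := by
    ext X; simp [ip, abs_le]
  rw [h, measureReal_def, measureReal_def, ← Measure.map_apply (by fun_prop) measurableSet_Icc,
    map_signed_sum n _ (spin_sq s)]
  simp

lemma gaussianReal_Icc_ge {n : ℕ} (hn : 0 < n) (b : ℝ) (hb : 0 ≤ b) :
    2 * b / √(2 * Real.pi * n) * Real.exp (-(b ^ 2 / (2 * n))) ≤
      (gaussianReal 0 (n : NNReal)).real (Set.Icc (-b) b) := by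
  rw [measureReal_def, gaussianReal_apply_eq_integral _ (by positivity), ENNReal.toReal_ofReal
    (integral_nonneg fun x => gaussianPDFReal_nonneg _ _ _)]
  have hc : ∫ x in Set.Icc (-b) b, (√(2 * Real.pi * n))⁻¹ * Real.exp (-(b ^ 2 / (2 * n))) =
      2 * b / √(2 * Real.pi * n) * Real.exp (-(b ^ 2 / (2 * n))) := by
    simp only [setIntegral_const, measureReal_def, Real.volume_Icc, smul_eq_mul]
    rw [ENNReal.toReal_ofReal (by linarith)]; ring
  rw [← hc]
  apply setIntegral_mono_on
  · exact integrableOn_const (by simp)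
  · exact (integrable_gaussianPDFReal _ _).integrableOn
  · exact measurableSet_Icc
  · intro x hx
    unfold gaussianPDFReal
    simp only [NNReal.coe_natCast, sub_zero]
    gcongr
    rw [neg_div, neg_le_neg_iff]
    gcongr ?_ / _
    exact sq_le_sq' hx.1 hx.2

/-! ### Second moment method and binomial sums -/

/-- Chebyshev's inequality for the number of events `E i` that occur. -/
lemma count_le_half_prob {Ω ι : Type*} [MeasurableSpace Ω] (μ : Measure Ω)
    [IsProbabilityMeasure μ] [Fintype ι] (E : ι → Set Ω) (hE : ∀ i, MeasurableSet (E i)) (m : ℝ)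
    (hm : ∑ i, μ.real (E i) = m) (hm0 : 0 < m) :
    μ.real {ω | ∑ i, (E i).indicator (fun _ => (1 : ℝ)) ω ≤ m / 2} ≤
      4 * ((∑ i, ∑ j, μ.real (E i ∩ E j)) / m ^ 2 - 1) := by
  set N : Ω → ℝ := fun ω => ∑ i, (E i).indicator (fun _ => (1 : ℝ)) ω with hN
  have hind_int : ∀ S : Set Ω, MeasurableSet S → Integrable (S.indicator (fun _ => (1 : ℝ))) μ :=
    fun S hS => (integrable_const 1).indicator hS
  have hN1 : Integrable N μ := integrable_finsetSum _ fun i _ => hind_int _ (hE i)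
  have hIN : ∫ ω, N ω ∂μ = m := by
    rw [← hm, hN, integral_finsetSum _ fun i _ => hind_int _ (hE i)]
    apply Finset.sum_congr rfl
    intro i _
    rw [integral_indicator_const _ (hE i)]; simp
  have hsq : ∀ ω, N ω ^ 2 = ∑ i, ∑ j, (E i ∩ E j).indicator (fun _ => (1 : ℝ)) ω := by
    intro ω
    rw [hN, sq, Finset.sum_mul_sum]
    refine Finset.sum_congr rfl fun i _ => Finset.sum_congr rfl fun j _ => ?_
    by_cases h1 : ω ∈ E i <;> by_cases h2 : ω ∈ E j <;> simp [h1, h2]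
  have hint_pair : ∀ i j, Integrable ((E i ∩ E j).indicator (fun _ => (1 : ℝ))) μ :=
    fun i j => hind_int _ ((hE i).inter (hE j))
  have hN2 : Integrable (fun ω => N ω ^ 2) μ := by
    simp_rw [hsq]
    exact integrable_finsetSum _ fun i _ => integrable_finsetSum _ fun j _ => hint_pair i j
  have hIN2 : ∫ ω, N ω ^ 2 ∂μ = ∑ i, ∑ j, μ.real (E i ∩ E j) := by
    simp_rw [hsq]
    rw [integral_finsetSum _ fun i _ => integrable_finsetSum _ fun j _ => hint_pair i j]
    refine Finset.sum_congr rfl fun i _ => ?_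
    rw [integral_finsetSum _ fun j _ => hint_pair i j]
    refine Finset.sum_congr rfl fun j _ => ?_
    rw [integral_indicator_const _ ((hE i).inter (hE j))]; simp
  have hexp : ∀ ω, (N ω - m) ^ 2 = N ω ^ 2 - 2 * m * N ω + m ^ 2 := fun ω => by ring
  have hV : Integrable (fun ω => (N ω - m) ^ 2) μ := by
    simp_rw [hexp]
    exact (hN2.sub (hN1.const_mul _)).add (integrable_const _)
  have hIV : ∫ ω, (N ω - m) ^ 2 ∂μ = ∑ i, ∑ j, μ.real (E i ∩ E j) - m ^ 2 := by
    simp_rw [hexp]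
    rw [integral_add (f := fun ω => N ω ^ 2 - 2 * m * N ω) (hN2.sub (hN1.const_mul _))
      (integrable_const _), integral_sub hN2 (hN1.const_mul _), integral_const_mul, hIN, hIN2]
    simp; ring
  have hmk := mul_meas_ge_le_integral_of_nonneg (Filter.Eventually.of_forall fun ω =>
    sq_nonneg (N ω - m)) hV ((m / 2) ^ 2)
  rw [hIV] at hmk
  have hsub : μ.real {ω | N ω ≤ m / 2} ≤ μ.real {ω | (m / 2) ^ 2 ≤ (N ω - m) ^ 2} := by
    refine measureReal_mono (fun ω hω => ?_)
    simp only [Set.mem_ofPred_eq] at hω ⊢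
    nlinarith
  have h4 : (4 : ℝ) * ((∑ i, ∑ j, μ.real (E i ∩ E j)) / m ^ 2 - 1) =
      (∑ i, ∑ j, μ.real (E i ∩ E j) - m ^ 2) / (m / 2) ^ 2 := by
    field_simp; ring
  rw [h4, le_div_iff₀ (by positivity)]
  nlinarith [sq_nonneg (m / 2)]

lemma sum_hammingDist {n : ℕ} (s : Fin n → Bool) (f : ℕ → ℝ) :
    ∑ t : Fin n → Bool, f (hammingDist s t) = ∑ k ∈ Finset.range (n + 1), (n.choose k : ℝ) * f k := by
  classical
  have h := Finset.sum_powerset_apply_card f (x := (Finset.univ : Finset (Fin n)))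
  simp only [Finset.card_univ, Fintype.card_fin, nsmul_eq_mul] at h
  rw [← h]
  refine Finset.sum_bij' (fun t _ => Finset.univ.filter fun i => s i ≠ t i)
    (fun D _ => fun i => if i ∈ D then !(s i) else s i) ?_ ?_ ?_ ?_ ?_
  · simp
  · simp
  · intro t _
    ext i
    by_cases hi : s i = t i
    · simp [hi]
    · cases h1 : s i <;> cases h2 : t i <;> simp_all
  · intro D _
    ext i
    by_cases hi : i ∈ D <;> simp [hi]
  · intro t _; rfl

lemma sum_choose_div_succ (n : ℕ) :
    ∑ k ∈ Finset.range (n + 1), (n.choose k : ℝ) * (1 / (k + 1)) ≤ 2 ^ (n + 1) / (n + 1) := by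
  have h : ∀ k ∈ Finset.range (n + 1), (n.choose k : ℝ) * (1 / (k + 1)) =
      ((n + 1).choose (k + 1) : ℝ) / (n + 1) := by
    intro k _
    have := Nat.add_one_mul_choose_eq n k
    have h' : ((n : ℝ) + 1) * n.choose k = (n + 1).choose (k + 1) * (k + 1) := by exact_mod_cast this
    field_simp; linarith
  rw [Finset.sum_congr rfl h, ← Finset.sum_div]
  gcongr
  have := Nat.sum_range_choose (n + 1)
  rw [Finset.sum_range_succ'] at this
  have h2 : ∑ k ∈ Finset.range (n + 1), (n + 1).choose (k + 1) ≤ 2 ^ (n + 1) := by omega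
  exact_mod_cast h2

lemma sum_choose_div_succ_succ (n : ℕ) :
    ∑ k ∈ Finset.range (n + 1), (n.choose k : ℝ) * (1 / ((k + 1) * (k + 2))) ≤
      2 ^ (n + 2) / ((n + 1) * (n + 2)) := by
  have h : ∀ k ∈ Finset.range (n + 1), (n.choose k : ℝ) * (1 / ((k + 1) * (k + 2))) =
      (((n + 1).choose (k + 1) : ℝ) * (1 / ((k + 1 : ℕ) + 1))) / (n + 1) := by
    intro k _
    have := Nat.add_one_mul_choose_eq n k
    have h' : ((n : ℝ) + 1) * n.choose k = (n + 1).choose (k + 1) * (k + 1) := by exact_mod_cast this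
    push_cast
    field_simp
    linear_combination ((k : ℝ) + 2) * h'
  rw [Finset.sum_congr rfl h, ← Finset.sum_div]
  have h1 := sum_choose_div_succ (n + 1)
  rw [Finset.sum_range_succ'] at h1
  have h0 : (0 : ℝ) ≤ ((n + 1).choose 0 : ℝ) * (1 / ((0 : ℕ) + 1)) := by positivity
  have h2 : ∑ k ∈ Finset.range (n + 1), ((n + 1).choose (k + 1) : ℝ) * (1 / ((k + 1 : ℕ) + 1)) ≤
      2 ^ (n + 2) / (n + 2) := by
    have e : (((n + 1 : ℕ) : ℝ) + 1) = n + 2 := by push_cast; ring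
    rw [e] at h1
    linarith
  calc _ ≤ (2 ^ (n + 2) / ((n : ℝ) + 2)) / (n + 1) := by gcongr
    _ = _ := by rw [div_div, mul_comm ((n : ℝ) + 2)]

/-- If `k` is binomial `(n, 1/2)`, then `n / (2 √(k (n - k)))` averages to `1 + O(1 / n)`. By AM-GM,
`1 / w ≤ (1 + 1 / w ^ 2) / 2` for `w = 2 √(k (n - k)) / n`, and
`1 / w ^ 2 = (n / 4) (1 / k + 1 / (n - k))`, so inverse moments of a binomial variable suffice. -/
lemma sum_choose_inv_sqrt (n : ℕ) (hn : 0 < n) :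
    ∑ k ∈ Finset.range (n + 1), (n.choose k : ℝ) *
      (if 0 < k ∧ k < n then n / (2 * √(((n - k : ℕ) : ℝ) * k)) else 0) ≤ 2 ^ n * (1 + 3 / n) := by
  -- an upper bound of `1 / k` whose binomial averages are explicit
  set g : ℕ → ℝ := fun k => 1 / (k + 1) + 3 * (1 / ((k + 1) * (k + 2))) with hg
  have hg0 : ∀ k, 0 ≤ g k := fun k => by positivity
  have hg1 : ∀ k : ℕ, 0 < k → 1 / (k : ℝ) ≤ g k := by
    intro k hk
    have : (1 : ℝ) ≤ k := by exact_mod_cast hk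
    simp only [hg]
    rw [← sub_nonneg]
    have : 1 / ((k : ℝ) + 1) + 3 * (1 / ((k + 1) * (k + 2))) - 1 / k =
      (2 * (k - 1)) / ((k + 1) * (k + 2) * k) := by field_simp; ring
    rw [this]
    exact div_nonneg (by linarith) (by positivity)
  have hterm : ∀ k ∈ Finset.range (n + 1), (n.choose k : ℝ) *
      (if 0 < k ∧ k < n then n / (2 * √(((n - k : ℕ) : ℝ) * k)) else 0) ≤
      (n.choose k : ℝ) / 2 + n / 8 * (n.choose k * g k) + n / 8 * (n.choose k * g (n - k)) := by
    intro k hk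
    have hc : (0 : ℝ) ≤ n.choose k := by positivity
    have hgk := hg0 k
    have hgnk := hg0 (n - k)
    split_ifs with h
    · have h1 := hg1 k h.1
      have h2 := hg1 (n - k) (by omega)
      have hkp : (0 : ℝ) < k := by exact_mod_cast h.1
      have hlp : (0 : ℝ) < (n - k : ℕ) := by exact_mod_cast (by omega : 0 < n - k)
      have hsum : (n : ℝ) = (n - k : ℕ) + k := by
        rw [Nat.cast_sub h.2.le]; ring
      have key : (n : ℝ) / (2 * √(((n - k : ℕ) : ℝ) * k)) ≤
          1 / 2 + n / 8 * (1 / k) + n / 8 * (1 / (n - k : ℕ)) := by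
        generalize ((n - k : ℕ) : ℝ) = l at *
        have hw : 0 < √(l * k) := by positivity
        have hws : √(l * k) ^ 2 = l * k := Real.sq_sqrt (by positivity)
        have e : 1 / 2 + (n : ℝ) / 8 * (1 / k) + n / 8 * (1 / l) =
            1 / 2 + n ^ 2 / (8 * √(l * k) ^ 2) := by
          rw [hws, hsum]; field_simp; ring
        rw [e]
        generalize √(l * k) = w at *
        have : 1 / 2 + (n : ℝ) ^ 2 / (8 * w ^ 2) - n / (2 * w) = (n / (2 * w) - 1) ^ 2 / 2 := by
          field_simp; ring
        nlinarith [sq_nonneg ((n : ℝ) / (2 * w) - 1)]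
      have hn0 : (0 : ℝ) ≤ n := by positivity
      calc _ ≤ (n.choose k : ℝ) * (1 / 2 + n / 8 * g k + n / 8 * g (n - k)) := by
            gcongr
            refine key.trans ?_
            gcongr
        _ = _ := by ring
    · rw [mul_zero]; positivity
  refine (Finset.sum_le_sum hterm).trans ?_
  rw [Finset.sum_add_distrib, Finset.sum_add_distrib, ← Finset.mul_sum, ← Finset.mul_sum,
    ← Finset.sum_div]
  have hrefl : ∑ k ∈ Finset.range (n + 1), (n.choose k : ℝ) * g (n - k) =
      ∑ k ∈ Finset.range (n + 1), (n.choose k : ℝ) * g k := by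
    rw [← Finset.sum_flip]
    refine Finset.sum_congr rfl fun k hk => ?_
    have : k ≤ n := by simpa [Nat.lt_succ_iff] using hk
    rw [Nat.choose_symm this, Nat.sub_sub_self this]
  have hch : ∑ k ∈ Finset.range (n + 1), (n.choose k : ℝ) = 2 ^ n := by
    exact_mod_cast Nat.sum_range_choose n
  have hgs : ∑ k ∈ Finset.range (n + 1), (n.choose k : ℝ) * g k ≤
      2 ^ (n + 1) / (n + 1) + 3 * (2 ^ (n + 2) / ((n + 1) * (n + 2))) := by
    have : ∀ k ∈ Finset.range (n + 1), (n.choose k : ℝ) * g k = (n.choose k : ℝ) * (1 / (k + 1)) +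
        3 * ((n.choose k : ℝ) * (1 / ((k + 1) * (k + 2)))) := fun k _ => by simp only [hg]; ring
    rw [Finset.sum_congr rfl this, Finset.sum_add_distrib, ← Finset.mul_sum]
    linarith [sum_choose_div_succ n, sum_choose_div_succ_succ n]
  rw [hrefl, hch]
  have hn1 : (0 : ℝ) < n := by exact_mod_cast hn
  calc (2 : ℝ) ^ n / 2 + n / 8 * ∑ k ∈ Finset.range (n + 1), (n.choose k : ℝ) * g k +
        n / 8 * ∑ k ∈ Finset.range (n + 1), (n.choose k : ℝ) * g k
      ≤ (2 : ℝ) ^ n / 2 + n / 8 * (2 ^ (n + 1) / (n + 1) + 3 * (2 ^ (n + 2) / ((n + 1) * (n + 2)))) +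
        n / 8 * (2 ^ (n + 1) / (n + 1) + 3 * (2 ^ (n + 2) / ((n + 1) * (n + 2)))) := by gcongr
    _ = 2 ^ n * (1 / 2 + (n / (n + 1)) / 2 + 3 * (n / (n + 1)) / (n + 2)) := by
      rw [pow_add, pow_succ]; field_simp; ring
    _ ≤ 2 ^ n * (1 / 2 + 1 / 2 + 3 * 1 / n) := by
      have : (n : ℝ) / (n + 1) ≤ 1 := by rw [div_le_one (by positivity)]; linarith
      gcongr; linarith
    _ = _ := by norm_num

/-- Hamming balls of radius `κ n` have at most `2 ^ (n η)` points if `κ` is small enough: for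
`0 < x < 1` the indicator of `k ≤ κ n` is at most `x ^ k * x ^ (-κ n)`, and the binomial theorem gives
`((1 + x) x ^ (-κ)) ^ n`, where both factors are made at most `2 ^ (η / 2)`. -/
lemma exists_sum_choose_le (η : ℝ) (hη : 0 < η) : ∃ κ : ℝ, 0 < κ ∧ κ ≤ 1 / 4 ∧ ∀ n : ℕ,
    ∑ k ∈ Finset.range (n + 1), (n.choose k : ℝ) * (if (k : ℝ) ≤ κ * n then 1 else 0) ≤
      (2 : ℝ) ^ ((n : ℝ) * η) := by
  have h2 : 1 < (2 : ℝ) ^ (η / 2) := Real.one_lt_rpow (by norm_num) (by linarith)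
  set x : ℝ := min (1 / 2) ((2 : ℝ) ^ (η / 2) - 1) with hx
  have hx0 : 0 < x := lt_min (by norm_num) (by linarith)
  have hx1 : x < 1 := (min_le_left _ _).trans_lt (by norm_num)
  have hx2 : 1 + x ≤ (2 : ℝ) ^ (η / 2) := by linarith [min_le_right (1 / 2) ((2 : ℝ) ^ (η / 2) - 1)]
  have hlx : Real.log x < 0 := Real.log_neg hx0 hx1
  have hl2 : 0 < Real.log 2 := Real.log_pos (by norm_num)
  set κ : ℝ := min (1 / 4) (η / 2 * Real.log 2 / (-Real.log x)) with hκ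
  have hκ0 : 0 < κ := lt_min (by norm_num) (div_pos (by positivity) (by linarith))
  have hκx : x ^ (-κ) ≤ (2 : ℝ) ^ (η / 2) := by
    rw [Real.rpow_def_of_pos hx0, Real.rpow_def_of_pos (by norm_num)]
    apply Real.exp_le_exp.2
    have : κ * (-Real.log x) ≤ η / 2 * Real.log 2 := by
      rw [← le_div_iff₀ (by linarith)]; exact min_le_right _ _
    linarith
  refine ⟨κ, hκ0, min_le_left _ _, fun n => ?_⟩
  have hterm : ∀ k ∈ Finset.range (n + 1), (n.choose k : ℝ) * (if (k : ℝ) ≤ κ * n then 1 else 0) ≤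
      x ^ (-(κ * n)) * (x ^ k * 1 ^ (n - k) * n.choose k) := by
    intro k _
    split_ifs with h
    · have : 1 ≤ x ^ (-(κ * n)) * x ^ k := by
        rw [← Real.rpow_natCast x k, ← Real.rpow_add hx0]
        exact Real.one_le_rpow_of_pos_of_le_one_of_nonpos hx0 hx1.le (by linarith)
      have hc : (0 : ℝ) ≤ n.choose k := by positivity
      simp only [one_pow, mul_one]
      nlinarith
    · rw [mul_zero]; positivity
  refine (Finset.sum_le_sum hterm).trans ?_
  rw [← Finset.mul_sum, ← add_pow]
  calc x ^ (-(κ * n)) * (x + 1) ^ n = (x ^ (-κ)) ^ n * (1 + x) ^ n := by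
        rw [← Real.rpow_natCast (x ^ (-κ)), ← Real.rpow_mul hx0.le, add_comm x 1]; ring_nf
    _ ≤ ((2 : ℝ) ^ (η / 2)) ^ n * ((2 : ℝ) ^ (η / 2)) ^ n := by gcongr
    _ = _ := by
      rw [← mul_pow, ← Real.rpow_add (by norm_num), ← Real.rpow_natCast, ← Real.rpow_mul (by norm_num)]
      ring_nf

/-! ### Deterministic part: Gibbs masses -/

lemma ip_spin_spin {n : ℕ} (s t : Fin n → Bool) :
    ip (spin t) (spin s) = n - 2 * (hammingDist s t : ℝ) := by
  classical
  have h : ∀ i, spin t i * spin s i = 1 - 2 * (if s i ≠ t i then 1 else 0) := by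
    intro i
    unfold spin
    cases s i <;> cases t i <;> norm_num
  unfold ip
  rw [Finset.sum_congr rfl fun i _ => h i, Finset.sum_sub_distrib, ← Finset.mul_sum,
    Finset.sum_boole]
  simp [hammingDist]

lemma spin_isCube {n : ℕ} (s : Fin n → Bool) : isCube (spin s) := by
  intro i; unfold spin; cases s i <;> simp

lemma exists_spin {n : ℕ} {σ : Fin n → ℝ} (h : isCube σ) : ∃ s, spin s = σ := by
  classical
  refine ⟨fun i => decide (σ i = 1), ?_⟩
  ext i
  unfold spin
  rcases h i with h | h <;> simp [h]
  norm_num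

lemma spin_not {n : ℕ} (s : Fin n → Bool) : (spin fun i => !(s i)) = fun i => -(spin s i) := by
  ext i; unfold spin; cases h : s i <;> simp [h]

lemma ip_spin_not {n : ℕ} (s : Fin n → Bool) (X : Fin n → ℝ) :
    ip (spin fun i => !(s i)) X = -ip (spin s) X := by
  rw [spin_not]; unfold ip; simp

lemma spin_injective {n : ℕ} : Function.Injective (spin (n := n)) := by
  intro s t h
  ext i
  have := congrFun h i
  unfold spin at this
  cases hs : s i <;> cases ht : t i <;> simp_all <;> norm_num at this

lemma hammingDist_le_n {n : ℕ} (s t : Fin n → Bool) : hammingDist s t ≤ n := by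
  simpa using hammingDist_le_card_fintype (x := s) (y := t)

lemma hammingDist_not {n : ℕ} (s t : Fin n → Bool) :
    (hammingDist s fun i => !(t i)) = n - hammingDist s t := by
  have h1 := ip_spin_spin s t
  have h2 := ip_spin_spin s fun i => !(t i)
  rw [ip_spin_not, h1] at h2
  have h3 : (n : ℝ) = hammingDist s t + (hammingDist s fun i => !(t i) : ℕ) := by linarith
  have h4 : n = hammingDist s t + (hammingDist s fun i => !(t i)) := by exact_mod_cast h3
  omega

open Classical in
/-- The unnormalized Gibbs mass of `S`. -/
noncomputable def gibbsMass (n : ℕ) (b : ℝ) (X : Fin n → ℝ) (S : Set (Fin n → ℝ)) : ℝ :=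
  ∑ s : Fin n → Bool, if spin s ∈ S then gibbsWeight n b X s else 0

lemma gibbsProb_eq (n : ℕ) (b : ℝ) (X : Fin n → ℝ) (S : Set (Fin n → ℝ)) :
    gibbsProb n b X S = gibbsMass n b X S / gibbsZ n b X := rfl

lemma gibbsWeight_pos (n : ℕ) (b : ℝ) (X : Fin n → ℝ) (s : Fin n → Bool) :
    0 < gibbsWeight n b X s := Real.exp_pos _

lemma gibbsZ_pos (n : ℕ) (b : ℝ) (X : Fin n → ℝ) : 0 < gibbsZ n b X :=
  Finset.sum_pos (fun s _ => gibbsWeight_pos n b X s) Finset.univ_nonempty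

lemma gibbsWeight_not (n : ℕ) (b : ℝ) (X : Fin n → ℝ) (s : Fin n → Bool) :
    gibbsWeight n b X (fun i => !(s i)) = gibbsWeight n b X s := by
  unfold gibbsWeight; rw [ip_spin_not, abs_neg]

lemma le_gibbsMass {n : ℕ} (b : ℝ) (X : Fin n → ℝ) {S : Set (Fin n → ℝ)} {s : Fin n → Bool}
    (hs : spin s ∈ S) : gibbsWeight n b X s ≤ gibbsMass n b X S := by
  classical
  unfold gibbsMass
  have h : (fun s => if spin s ∈ S then gibbsWeight n b X s else 0) s = gibbsWeight n b X s := by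
    simp [hs]
  rw [← h]
  apply Finset.single_le_sum (f := fun s => if spin s ∈ S then gibbsWeight n b X s else 0)
  · intro t _
    have := (gibbsWeight_pos n b X t).le
    split_ifs <;> simp [this]
  · exact Finset.mem_univ _

lemma gibbsMass_le {n : ℕ} (b : ℝ) (X : Fin n → ℝ) {S : Set (Fin n → ℝ)} {w : ℝ} (hw : 0 ≤ w)
    (h : ∀ s, spin s ∈ S → gibbsWeight n b X s ≤ w) : gibbsMass n b X S ≤ 2 ^ n * w := by
  classical
  unfold gibbsMass
  calc _ ≤ ∑ s : Fin n → Bool, w := by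
        apply Finset.sum_le_sum
        intro s _
        split_ifs with hs
        · exact h s hs
        · exact hw
    _ = _ := by simp

/-- The free-energy well on the good event: no two sign vectors at distance between `1` and `κ n` both
have energy at most `2 τ`, and at least three sign vectors have energy at most `τ / 4`. Then
`I₂` has energies above `2 τ`, while `σ*` and some vector of `I₁` have energy at most `τ / 4`; the gap
beats the entropy `2 ^ n ≤ exp n ≤ exp (b τ)`. -/
lemma well_of_good {n : ℕ} (hn : 0 < n) {κ τ b : ℝ}
    (hτ : 0 < τ) (hb : (n : ℝ) ≤ b * τ) (X : Fin n → ℝ) (σ : Fin n → ℝ) (hσ : isCube σ)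
    (hmin : ∀ σ', isCube σ' → |ip σ X| / √n ≤ |ip σ' X| / √n)
    (hno : ∀ s t : Fin n → Bool, 0 < hammingDist s t → (hammingDist s t : ℝ) ≤ κ * n →
      |ip (spin s) X| ≤ 2 * τ * √n → |ip (spin t) X| ≤ 2 * τ * √n → False)
    (hfew : 2 < (Finset.univ.filter fun s : Fin n → Bool => |ip (spin s) X| ≤ τ / 4 * √n).card) :
    Real.exp (1 / 4 * b * τ) * gibbsProb n b X (setI2 n (1 - 2 * κ) σ) ≤
      min (gibbsProb n b X (setI1 n (1 - 2 * κ) σ)) (gibbsProb n b X {σ}) := by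
  classical
  obtain ⟨s₀, rfl⟩ := exists_spin hσ
  have hn0 : (0 : ℝ) < n := by exact_mod_cast hn
  have hsn : 0 < √(n : ℝ) := by positivity
  have hb0 : 0 < b := by
    by_contra h
    push Not at h
    nlinarith
  have hZ := gibbsZ_pos n b X
  have hτn : 0 < τ * √n := by positivity
  -- a low-energy sign vector other than `± σ*`
  obtain ⟨s₁, hs₁, hne₀, hne₁⟩ : ∃ s₁ : Fin n → Bool, |ip (spin s₁) X| ≤ τ / 4 * √n ∧
      s₁ ≠ s₀ ∧ s₁ ≠ fun i => !(s₀ i) := by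
    by_contra hcon
    push Not at hcon
    have hsub : (Finset.univ.filter fun s : Fin n → Bool => |ip (spin s) X| ≤ τ / 4 * √n) ⊆
        {s₀, fun i => !(s₀ i)} := by
      intro s hs
      rw [Finset.mem_filter] at hs
      rw [Finset.mem_insert, Finset.mem_singleton]
      by_cases h : s = s₀
      · exact Or.inl h
      · exact Or.inr (hcon s hs.2 h)
    have := (Finset.card_le_card hsub).trans Finset.card_le_two
    omega
  have hlow : |ip (spin s₀) X| / √n ≤ τ / 4 :=
    (hmin _ (spin_isCube s₁)).trans ((div_le_iff₀ hsn).2 hs₁)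
  have hlow' : |ip (spin s₀) X| ≤ 2 * τ * √n := by
    rw [div_le_iff₀ hsn] at hlow; nlinarith
  have hs₁' : |ip (spin s₁) X| ≤ 2 * τ * √n := by nlinarith
  have hk : (hammingDist s₀ s₁ : ℝ) > κ * n := by
    by_contra h
    push Not at h
    exact hno s₀ s₁ (hammingDist_pos.2 (Ne.symm hne₀)) h hlow' hs₁'
  have hk' : ((n - hammingDist s₀ s₁ : ℕ) : ℝ) > κ * n := by
    by_contra h
    push Not at h
    rw [← hammingDist_not] at h
    refine hno s₀ _ (hammingDist_pos.2 ?_) h hlow' (by rw [ip_spin_not, abs_neg]; exact hs₁')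
    intro h'
    apply hne₁
    rw [h']; simp
  rw [Nat.cast_sub (hammingDist_le_n _ _)] at hk'
  have hmem₁ : spin s₁ ∈ setI1 n (1 - 2 * κ) (spin s₀) := by
    refine ⟨spin_isCube _, ?_, ?_⟩
    · rw [ip_spin_spin, le_div_iff₀ hn0]; nlinarith
    · rw [ip_spin_spin, div_le_iff₀ hn0]; nlinarith
  have hw : ∀ s : Fin n → Bool, |ip (spin s) X| / √n ≤ τ / 4 →
      Real.exp (-(b * τ / 4)) ≤ gibbsWeight n b X s := by
    intro s hs
    apply Real.exp_le_exp.2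
    nlinarith
  have hm₁ := (hw s₁ ((div_le_iff₀ hsn).2 hs₁)).trans (le_gibbsMass b X hmem₁)
  have hm₀ := (hw s₀ hlow).trans (le_gibbsMass b X (Set.mem_singleton (spin s₀)))
  have hm₂ : gibbsMass n b X (setI2 n (1 - 2 * κ) (spin s₀)) ≤ 2 ^ n * Real.exp (-(2 * (b * τ))) := by
    apply gibbsMass_le _ _ (Real.exp_pos _).le
    rintro s ⟨-, h1, h2⟩
    rw [ip_spin_spin] at h1 h2
    rw [div_le_div_iff_of_pos_right hn0] at h2
    rw [le_div_iff₀ hn0] at h1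
    have hd1 : (0 : ℝ) < hammingDist s₀ s := by linarith
    have hbig : 2 * τ * √n < |ip (spin s) X| := by
      by_contra h
      push Not at h
      exact hno s₀ s (by exact_mod_cast hd1) (by nlinarith) hlow' h
    have : 2 * τ ≤ |ip (spin s) X| / √n := (le_div_iff₀ hsn).2 hbig.le
    apply Real.exp_le_exp.2
    nlinarith
  have h2n : (2 : ℝ) ^ n ≤ Real.exp n := by
    have : (2 : ℝ) ≤ Real.exp 1 := by linarith [Real.add_one_le_exp 1]
    calc (2 : ℝ) ^ n ≤ (Real.exp 1) ^ n := by gcongr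
      _ = _ := by rw [← Real.exp_nat_mul]; simp
  have key : Real.exp (1 / 4 * b * τ) * gibbsMass n b X (setI2 n (1 - 2 * κ) (spin s₀)) ≤
      Real.exp (-(b * τ / 4)) := by
    calc _ ≤ Real.exp (1 / 4 * b * τ) * (Real.exp n * Real.exp (-(2 * (b * τ)))) := by
          gcongr
          refine hm₂.trans ?_
          gcongr
      _ = Real.exp (1 / 4 * b * τ + (n + -(2 * (b * τ)))) := by rw [Real.exp_add, Real.exp_add]
      _ ≤ _ := Real.exp_le_exp.2 (by linarith)
  simp only [gibbsProb_eq]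
  rw [← mul_div_assoc]
  exact le_min (by gcongr; exact key.trans hm₁) (by gcongr; exact key.trans hm₀)

/-- By the symmetry `σ ↦ -σ`, the total mass `1` is at most `π(I₁) + 2 π(I₂) + 2 π(σ*)`. -/
lemma mass_ge_half_sub {n : ℕ} (hn : 0 < n) {ρ b : ℝ} (hρ : ρ < 1) (X σ : Fin n → ℝ)
    (hσ : isCube σ) :
    1 / 2 - gibbsProb n b X (setI2 n ρ σ) ≤
      gibbsProb n b X (setI1 n ρ σ ∪ {fun i => -(σ i)}) := by
  classical
  obtain ⟨s₀, rfl⟩ := exists_spin hσ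
  have hn0 : (0 : ℝ) < n := by exact_mod_cast hn
  have hZ := gibbsZ_pos n b X
  set w := gibbsWeight n b X with hwdef
  have hwpos : ∀ s, 0 < w s := gibbsWeight_pos n b X
  set f : Set (Fin n → ℝ) → (Fin n → Bool) → ℝ := fun S s => if spin s ∈ S then w s else 0 with hf
  have hf0 : ∀ S s, 0 ≤ f S s := by
    intro S s
    simp only [hf]
    split_ifs
    · exact (hwpos s).le
    · exact le_rfl
  have hfm : ∀ S s, spin s ∈ S → f S s = w s := fun S s h => by simp [hf, h]
  have hmass : ∀ S, gibbsMass n b X S = ∑ s, f S s := fun S => rfl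
  set A := setI1 n ρ (spin s₀) with hA
  set B := setI2 n ρ (spin s₀) with hB
  set s₀' : Fin n → Bool := fun i => !(s₀ i) with hs₀'
  have hneg : (fun i => -(spin s₀ i)) = spin s₀' := (spin_not s₀).symm
  rw [hneg]
  -- every sign vector lies in `I₁`, `I₂`, `-I₂` or `{± σ*}`
  have hcover : ∀ s, w s ≤ f A s + f B s + f B (fun i => !(s i)) + f {spin s₀} s +
      f {spin s₀'} s := by
    intro s
    have h1 := hf0 A s
    have h2 := hf0 B s
    have h3 := hf0 B fun i => !(s i)
    have h4 := hf0 {spin s₀} s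
    have h5 := hf0 {spin s₀'} s
    by_cases e0 : s = s₀
    · have := hfm {spin s₀} s (by rw [e0]; rfl)
      linarith
    by_cases e1 : s = s₀'
    · have := hfm {spin s₀'} s (by rw [e1]; rfl)
      linarith
    have hd0 : 0 < hammingDist s₀ s := hammingDist_pos.2 (Ne.symm e0)
    have hd1 : 0 < hammingDist s₀ (fun i => !(s i)) := by
      apply hammingDist_pos.2
      intro h
      apply e1
      rw [hs₀', h]; simp
    have hip := ip_spin_spin s₀ s
    have hip' := ip_spin_spin s₀ fun i => !(s i)
    have hipn := ip_spin_not s (spin s₀)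
    have hd0' : (1 : ℝ) ≤ hammingDist s₀ s := by exact_mod_cast hd0
    have hd1' : (1 : ℝ) ≤ hammingDist s₀ (fun i => !(s i)) := by exact_mod_cast hd1
    by_cases c1 : ρ < ip (spin s) (spin s₀) / n
    · have : spin s ∈ B := ⟨spin_isCube _, c1.le, by rw [hip]; gcongr; linarith⟩
      linarith [hfm B s this]
    by_cases c2 : ip (spin s) (spin s₀) / n < -ρ
    · have : (spin fun i => !(s i)) ∈ B :=
        ⟨spin_isCube _, by rw [hipn, neg_div]; linarith, by rw [hip']; gcongr; linarith⟩
      have h' := hfm B _ this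
      rw [hwdef, gibbsWeight_not] at h'
      linarith
    · push Not at c1 c2
      linarith [hfm A s ⟨spin_isCube _, c2, c1⟩]
  have hsumB : ∑ s : Fin n → Bool, f B (fun i => !(s i)) = ∑ s, f B s :=
    Equiv.sum_comp (Equiv.piCongrRight fun _ : Fin n => Equiv.boolNot) (f B)
  have hZle : gibbsZ n b X ≤ gibbsMass n b X A + 2 * gibbsMass n b X B +
      gibbsMass n b X {spin s₀} + gibbsMass n b X {spin s₀'} := by
    have := Finset.sum_le_sum fun s (_ : s ∈ Finset.univ) => hcover s
    simp only [Finset.sum_add_distrib, hsumB, ← hmass] at this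
    have e : gibbsZ n b X = ∑ s, w s := rfl
    linarith
  have hsing : ∀ t, gibbsMass n b X {spin t} = w t := by
    intro t
    rw [hmass]
    simp only [hf, Set.mem_singleton_iff, spin_injective.eq_iff]
    simp
  have hw' : w s₀' = w s₀ := gibbsWeight_not n b X s₀
  have hunion : gibbsMass n b X (A ∪ {spin s₀'}) = gibbsMass n b X A + w s₀' := by
    rw [← hsing s₀', hmass, hmass, hmass, ← Finset.sum_add_distrib]
    refine Finset.sum_congr rfl fun s _ => ?_
    have hdisj : spin s₀' ∉ A := by
      rintro ⟨-, h, -⟩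
      have e := ip_spin_not s₀ (spin s₀)
      have e2 := ip_spin_spin s₀ s₀
      rw [hammingDist_self] at e2
      rw [e, e2] at h
      simp only [CharP.cast_eq_zero, mul_zero, sub_zero, neg_div, div_self hn0.ne'] at h
      linarith
    simp only [hf, Set.mem_union, Set.mem_singleton_iff]
    by_cases h1 : spin s = spin s₀'
    · rw [h1]; simp [hdisj]
    · simp [h1]
  rw [hsing, hsing, hw'] at hZle
  have hA0 : 0 ≤ gibbsMass n b X A := Finset.sum_nonneg fun s _ => hf0 A s
  rw [gibbsProb_eq, gibbsProb_eq, hunion, hw', sub_le_iff_le_add, ← add_div, le_div_iff₀ hZ]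
  linarith

lemma gibbsMass_nonneg (n : ℕ) (b : ℝ) (X : Fin n → ℝ) (S : Set (Fin n → ℝ)) :
    0 ≤ gibbsMass n b X S := by
  classical
  refine Finset.sum_nonneg fun s _ => ?_
  have := (gibbsWeight_pos n b X s).le
  split_ifs <;> simp [this]

lemma gibbsProb_nonneg (n : ℕ) (b : ℝ) (X : Fin n → ℝ) (S : Set (Fin n → ℝ)) :
    0 ≤ gibbsProb n b X S :=
  div_nonneg (gibbsMass_nonneg n b X S) (gibbsZ_pos n b X).le

lemma gibbsProb_le_one (n : ℕ) (b : ℝ) (X : Fin n → ℝ) (S : Set (Fin n → ℝ)) :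
    gibbsProb n b X S ≤ 1 := by
  classical
  rw [gibbsProb_eq, div_le_one (gibbsZ_pos n b X)]
  unfold gibbsMass gibbsZ
  apply Finset.sum_le_sum
  intro s _
  have := (gibbsWeight_pos n b X s).le
  split_ifs <;> simp [this]

/-! ### Probabilities of the two bad events -/

/-- Union bound over pairs `(s, t)`: each pair at distance `1 ≤ k ≤ κ n` contributes at most
`a ^ 2`, since `√(k (n - k)) ≥ 1`. -/
lemma prob_close_pair_le {n : ℕ} (hn : 0 < n) {κ a : ℝ} (hκ : κ ≤ 1 / 4) (ha : 0 ≤ a) :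
    (_root_.stdGaussian n).real {X | ∃ s t : Fin n → Bool, 0 < hammingDist s t ∧
      (hammingDist s t : ℝ) ≤ κ * n ∧ |ip (spin s) X| ≤ a ∧ |ip (spin t) X| ≤ a} ≤
    2 ^ n * (∑ k ∈ Finset.range (n + 1), (n.choose k : ℝ) * (if (k : ℝ) ≤ κ * n then 1 else 0)) *
      a ^ 2 := by
  classical
  have hn0 : (0 : ℝ) < n := by exact_mod_cast hn
  set E : (Fin n → Bool) → Set (Fin n → ℝ) := fun s => {X | |ip (spin s) X| ≤ a} with hE
  set F : (Fin n → Bool) × (Fin n → Bool) → Set (Fin n → ℝ) := fun p =>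
    if 0 < hammingDist p.1 p.2 ∧ (hammingDist p.1 p.2 : ℝ) ≤ κ * n then E p.1 ∩ E p.2 else ∅ with hF
  have hsub : {X | ∃ s t : Fin n → Bool, 0 < hammingDist s t ∧
      (hammingDist s t : ℝ) ≤ κ * n ∧ |ip (spin s) X| ≤ a ∧ |ip (spin t) X| ≤ a} ⊆ ⋃ p, F p := by
    rintro X ⟨s, t, h1, h2, h3, h4⟩
    refine Set.mem_iUnion.2 ⟨(s, t), ?_⟩
    simp only [hF, h1, h2, and_self, if_true]
    exact ⟨h3, h4⟩
  have hbd : ∀ p, (_root_.stdGaussian n).real (F p) ≤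
      (if (hammingDist p.1 p.2 : ℝ) ≤ κ * n then 1 else 0) * a ^ 2 := by
    intro p
    by_cases h : 0 < hammingDist p.1 p.2 ∧ (hammingDist p.1 p.2 : ℝ) ≤ κ * n
    · have hlt : hammingDist p.1 p.2 < n := by
        have : (hammingDist p.1 p.2 : ℝ) < n := by nlinarith [h.2]
        exact_mod_cast this
      simp only [hF, h, and_self, if_true, one_mul]
      refine (prob_pair_le p.1 p.2 h.1 hlt a ha).trans ?_
      apply div_le_self (by positivity)
      have h1 : (1 : ℝ) ≤ ((n - hammingDist p.1 p.2 : ℕ) : ℝ) := by exact_mod_cast (by omega)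
      have h2 : (1 : ℝ) ≤ (hammingDist p.1 p.2 : ℝ) := by exact_mod_cast h.1
      have h3 : (1 : ℝ) ≤ √(((n - hammingDist p.1 p.2 : ℕ) : ℝ) * (hammingDist p.1 p.2 : ℝ)) := by
        rw [Real.one_le_sqrt]; nlinarith
      nlinarith [Real.pi_gt_three]
    · simp only [hF, h, if_false, measureReal_empty]
      split_ifs <;> positivity
  calc _ ≤ (_root_.stdGaussian n).real (⋃ p, F p) := measureReal_mono hsub
    _ ≤ ∑ p, (_root_.stdGaussian n).real (F p) := measureReal_iUnion_fintype_le _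
    _ ≤ ∑ p : (Fin n → Bool) × (Fin n → Bool),
        (if (hammingDist p.1 p.2 : ℝ) ≤ κ * n then 1 else 0) * a ^ 2 :=
      Finset.sum_le_sum fun p _ => hbd p
    _ = _ := by
      rw [← Finset.sum_mul, Fintype.sum_prod_type]
      simp only [sum_hammingDist _ (fun k : ℕ => if (k : ℝ) ≤ κ * n then (1 : ℝ) else 0)]
      simp

/-- Second moment bound for the number of sign vectors with `|⟨σ, X⟩| ≤ b`. Here `L` is the Lebesgue
approximation of `P(|⟨σ, X⟩| ≤ b)`, off by a factor at most `exp u`. The first summand comes from the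
pairs `t = ± s`, and the factor `1 + 3 / n` from averaging the correlations of all other pairs. -/
lemma prob_few_le {n : ℕ} (hn : 0 < n) {b L u : ℝ} (hb : 0 < b)
    (hL : L = 2 * b / √(2 * Real.pi * n)) (hu : u = b ^ 2 / (2 * n))
    (h4 : 4 ≤ 2 ^ n * L * Real.exp (-u)) :
    (_root_.stdGaussian n).real {X | (Finset.univ.filter
      fun s : Fin n → Bool => |ip (spin s) X| ≤ b).card ≤ 2} ≤
    4 * (2 * Real.exp u / (2 ^ n * L) + Real.exp (2 * u) * (1 + 3 / n) - 1) := by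
  classical
  have hn0 : (0 : ℝ) < n := by exact_mod_cast hn
  have hL0 : 0 < L := by rw [hL]; positivity
  set p := (gaussianReal 0 (n : NNReal)).real (Set.Icc (-b) b) with hp
  have hpL : L * Real.exp (-u) ≤ p := by rw [hL, hu]; exact gaussianReal_Icc_ge hn b hb.le
  have hp0 : 0 < p := lt_of_lt_of_le (by positivity) hpL
  set E : (Fin n → Bool) → Set (Fin n → ℝ) := fun s => {X | |ip (spin s) X| ≤ b} with hE
  have hEp : ∀ s, (_root_.stdGaussian n).real (E s) = p := fun s => prob_single s b
  have hm : ∑ s, (_root_.stdGaussian n).real (E s) = 2 ^ n * p := by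
    simp only [hEp]; simp
  have hcheb := count_le_half_prob (_root_.stdGaussian n) E (fun s => measurableSet_ip_le s b)
    (2 ^ n * p) hm (by positivity)
  have hsub : (_root_.stdGaussian n).real {X | (Finset.univ.filter
      fun s : Fin n → Bool => |ip (spin s) X| ≤ b).card ≤ 2} ≤ (_root_.stdGaussian n).real
      {X | ∑ s, (E s).indicator (fun _ => (1 : ℝ)) X ≤ 2 ^ n * p / 2} := by
    refine measureReal_mono (fun X hX => ?_)
    simp only [Set.mem_ofPred_eq] at hX ⊢
    have e : ∑ s, (E s).indicator (fun _ => (1 : ℝ)) X =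
        ((Finset.univ.filter fun s : Fin n → Bool => |ip (spin s) X| ≤ b).card : ℝ) := by
      simp [Set.indicator_apply, hE, Finset.sum_boole]
    rw [e]
    have h2 : ((Finset.univ.filter fun s : Fin n → Bool => |ip (spin s) X| ≤ b).card : ℝ) ≤ 2 := by
      exact_mod_cast hX
    have h3 : 2 ^ n * (L * Real.exp (-u)) ≤ 2 ^ n * p := by gcongr
    linarith
  refine hsub.trans (hcheb.trans ?_)
  have hLsq : L ^ 2 = 2 * b ^ 2 / (Real.pi * n) := by
    rw [hL, div_pow, Real.sq_sqrt (by positivity)]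
    have := Real.pi_pos
    field_simp
  set g : ℕ → ℝ := fun k => if 0 < k ∧ k < n then n / (2 * √(((n - k : ℕ) : ℝ) * k)) else 0 with hg
  have hg0 : ∀ k, 0 ≤ g k := by
    intro k; simp only [hg]; split_ifs <;> positivity
  have hpair : ∀ s t, (_root_.stdGaussian n).real (E s ∩ E t) ≤
      (fun k : ℕ => L ^ 2 * g k + (if k = 0 then p else 0) + (if k = n then p else 0))
        (hammingDist s t) := by
    intro s t
    have hle : (_root_.stdGaussian n).real (E s ∩ E t) ≤ p := by
      rw [← hEp s]; exact measureReal_mono Set.inter_subset_left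
    have hgg := mul_nonneg (sq_nonneg L) (hg0 (hammingDist s t))
    dsimp only
    by_cases e0 : hammingDist s t = 0
    · rw [if_pos e0]
      have : 0 ≤ (if hammingDist s t = n then p else 0) := by split_ifs <;> positivity
      linarith
    by_cases e1 : hammingDist s t = n
    · rw [if_pos e1]
      have : 0 ≤ (if hammingDist s t = 0 then p else 0) := by split_ifs <;> positivity
      linarith
    have hlt : hammingDist s t < n := lt_of_le_of_ne (hammingDist_le_n s t) e1
    have hpos : 0 < hammingDist s t := Nat.pos_of_ne_zero e0
    refine (prob_pair_le s t hpos hlt b hb.le).trans ?_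
    simp only [hg, hpos, hlt, and_self, if_true, e0, e1, if_false, add_zero]
    rw [hLsq]
    have h1 : (0 : ℝ) < ((n - hammingDist s t : ℕ) : ℝ) := by exact_mod_cast (by omega)
    have h2 : (0 : ℝ) < (hammingDist s t : ℝ) := by exact_mod_cast hpos
    have h3 : 0 < √(((n - hammingDist s t : ℕ) : ℝ) * (hammingDist s t : ℝ)) := by positivity
    have := Real.pi_pos
    apply le_of_eq
    field_simp
  have hsum : ∑ s, ∑ t, (_root_.stdGaussian n).real (E s ∩ E t) ≤
      2 ^ n * (L ^ 2 * (2 ^ n * (1 + 3 / n)) + p + p) := by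
    calc _ ≤ ∑ s : Fin n → Bool, ∑ t, (fun k : ℕ => L ^ 2 * g k + (if k = 0 then p else 0) +
          (if k = n then p else 0)) (hammingDist s t) :=
          Finset.sum_le_sum fun s _ => Finset.sum_le_sum fun t _ => hpair s t
      _ = ∑ s : Fin n → Bool, (L ^ 2 * ∑ k ∈ Finset.range (n + 1), (n.choose k : ℝ) * g k + p + p) := by
        refine Finset.sum_congr rfl fun s _ => ?_
        rw [sum_hammingDist s (fun k : ℕ => L ^ 2 * g k + (if k = 0 then p else 0) +
          (if k = n then p else 0))]
        simp only [mul_add, Finset.sum_add_distrib, mul_ite, mul_zero, Finset.sum_ite_eq',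
          Finset.mem_range]
        simp [Finset.mul_sum, mul_left_comm]
      _ = 2 ^ n * (L ^ 2 * (∑ k ∈ Finset.range (n + 1), (n.choose k : ℝ) * g k) + p + p) := by simp; ring
      _ ≤ _ := by
        gcongr
        exact sum_choose_inv_sqrt n hn
  have hpinv : 1 / p ≤ Real.exp u / L := by
    rw [div_le_div_iff₀ hp0 hL0]
    calc 1 * L = Real.exp u * (L * Real.exp (-u)) := by
          rw [Real.exp_neg]; field_simp
      _ ≤ _ := by gcongr
  have hLp : (L / p) ^ 2 ≤ Real.exp (2 * u) := by
    have : L / p ≤ Real.exp u := by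
      calc L / p = L * (1 / p) := by ring
        _ ≤ L * (Real.exp u / L) := by gcongr
        _ = _ := by field_simp
    calc _ ≤ (Real.exp u) ^ 2 := by gcongr
      _ = _ := by rw [← Real.exp_nat_mul]; simp
  gcongr 4 * (?_ - 1)
  calc _ ≤ 2 ^ n * (L ^ 2 * (2 ^ n * (1 + 3 / n)) + p + p) / (2 ^ n * p) ^ 2 := by gcongr
    _ = 2 / 2 ^ n * (1 / p) + (L / p) ^ 2 * (1 + 3 / n) := by field_simp; ring
    _ ≤ 2 / 2 ^ n * (Real.exp u / L) + Real.exp (2 * u) * (1 + 3 / n) := by gcongr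
    _ = _ := by congr 1; field_simp

lemma tendsto_two_rpow_neg {a : ℝ} (ha : 0 < a) :
    Tendsto (fun n : ℕ => (2 : ℝ) ^ (-(n : ℝ) * a)) atTop (nhds 0) := by
  have h : ∀ n : ℕ, (2 : ℝ) ^ (-(n : ℝ) * a) = ((2 : ℝ) ^ (-a)) ^ n := by
    intro n
    rw [← Real.rpow_natCast, ← Real.rpow_mul (by norm_num)]; ring_nf
  simp_rw [h]
  exact tendsto_pow_atTop_nhds_zero_of_lt_one (by positivity)
    (Real.rpow_lt_one_of_one_lt_of_neg (by norm_num) (by linarith))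

lemma tendsto_mul_two_rpow_neg {a : ℝ} (ha : 0 < a) :
    Tendsto (fun n : ℕ => (n : ℝ) * (2 : ℝ) ^ (-(n : ℝ) * a)) atTop (nhds 0) := by
  have h : ∀ n : ℕ, (2 : ℝ) ^ (-(n : ℝ) * a) = ((2 : ℝ) ^ (-a)) ^ n := by
    intro n
    rw [← Real.rpow_natCast, ← Real.rpow_mul (by norm_num)]; ring_nf
  simp_rw [h]
  exact tendsto_self_mul_const_pow_of_lt_one (by positivity)
    (Real.rpow_lt_one_of_one_lt_of_neg (by norm_num) (by linarith))

/-- The exponents add up to `1 + (ε - 1/2) - 2 ε = -(ε - 1/2)`, which is where `ε > 1/2` is used. -/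
lemma tendsto_prob_close_pair {ε κ : ℝ} (hε : 1 / 2 < ε) (hκ : κ ≤ 1 / 4)
    (hsum : ∀ n : ℕ, ∑ k ∈ Finset.range (n + 1), (n.choose k : ℝ) *
      (if (k : ℝ) ≤ κ * n then 1 else 0) ≤ (2 : ℝ) ^ ((n : ℝ) * (ε - 1 / 2))) :
    Tendsto (fun n : ℕ => (_root_.stdGaussian n).real {X | ∃ s t : Fin n → Bool,
      0 < hammingDist s t ∧ (hammingDist s t : ℝ) ≤ κ * n ∧
      |ip (spin s) X| ≤ 2 * (2 : ℝ) ^ (-(n : ℝ) * ε) * √n ∧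
      |ip (spin t) X| ≤ 2 * (2 : ℝ) ^ (-(n : ℝ) * ε) * √n}) atTop (nhds 0) := by
  have hlim : Tendsto (fun n : ℕ => 4 * ((n : ℝ) * (2 : ℝ) ^ (-(n : ℝ) * (ε - 1 / 2))))
      atTop (nhds 0) := by
    simpa using (tendsto_mul_two_rpow_neg (a := ε - 1 / 2) (by linarith)).const_mul 4
  refine tendsto_of_tendsto_of_tendsto_of_le_of_le' tendsto_const_nhds hlim
    (Eventually.of_forall fun n => measureReal_nonneg) ?_
  filter_upwards [eventually_gt_atTop 0] with n hn
  refine (prob_close_pair_le hn hκ (by positivity)).trans ?_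
  calc _ ≤ 2 ^ n * (2 : ℝ) ^ ((n : ℝ) * (ε - 1 / 2)) * (2 * (2 : ℝ) ^ (-(n : ℝ) * ε) * √n) ^ 2 := by
        gcongr; exact hsum n
    _ = 4 * (n * ((2 : ℝ) ^ (n : ℝ) * (2 : ℝ) ^ ((n : ℝ) * (ε - 1 / 2)) *
        ((2 : ℝ) ^ (-(n : ℝ) * ε) * (2 : ℝ) ^ (-(n : ℝ) * ε)))) := by
      rw [mul_pow, Real.sq_sqrt (by positivity), Real.rpow_natCast]; ring
    _ = _ := by
      rw [← Real.rpow_add (by norm_num), ← Real.rpow_add (by norm_num),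
        ← Real.rpow_add (by norm_num)]
      ring_nf

/-- Since `ε < 1`, the expected number of sign vectors of energy at most `2 ^ (-n ε) / 4` grows like
`2 ^ (n (1 - ε))`, so the second moment method applies. -/
lemma tendsto_prob_few {ε : ℝ} (hε : 0 < ε) (hε1 : ε < 1) :
    Tendsto (fun n : ℕ => (_root_.stdGaussian n).real {X | (Finset.univ.filter
      fun s : Fin n → Bool => |ip (spin s) X| ≤ (2 : ℝ) ^ (-(n : ℝ) * ε) / 4 * √n).card ≤ 2})
      atTop (nhds 0) := by
  set τ : ℕ → ℝ := fun n => (2 : ℝ) ^ (-(n : ℝ) * ε) with hτ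
  -- the Lebesgue approximation of the one-vector probability is exactly `τ n / K`
  set K : ℝ := 2 * √(2 * Real.pi) with hK
  have hK0 : 0 < K := by have := Real.pi_pos; positivity
  have hτ0 : ∀ n, 0 < τ n := fun n => by positivity
  have hτlim : Tendsto τ atTop (nhds 0) := tendsto_two_rpow_neg hε
  have hulim : Tendsto (fun n => τ n ^ 2 / 32) atTop (nhds 0) := by
    simpa using (hτlim.pow 2).div_const 32
  have heu : Tendsto (fun n => Real.exp (τ n ^ 2 / 32)) atTop (nhds 1) := by
    simpa [Function.comp_def] using (Real.continuous_exp.tendsto 0).comp hulim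
  have heu2 : Tendsto (fun n => Real.exp (2 * (τ n ^ 2 / 32))) atTop (nhds 1) := by
    simpa [Function.comp_def] using (Real.continuous_exp.tendsto _).comp (hulim.const_mul 2)
  have hr : ∀ n : ℕ, (2 : ℝ) ^ n * (τ n / K) = ((2 : ℝ) ^ (-(n : ℝ) * (1 - ε)) * K)⁻¹ := by
    intro n
    have : (2 : ℝ) ^ n * τ n * (2 : ℝ) ^ (-(n : ℝ) * (1 - ε)) = 1 := by
      rw [← Real.rpow_natCast, hτ, ← Real.rpow_add (by norm_num), ← Real.rpow_add (by norm_num)]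
      ring_nf; simp
    apply eq_inv_of_mul_eq_one_left
    rw [← mul_assoc, mul_div_assoc', div_mul_eq_mul_div, div_mul_cancel₀ _ hK0.ne']
    exact this
  have hinv : Tendsto (fun n : ℕ => (2 : ℝ) ^ (-(n : ℝ) * (1 - ε)) * K) atTop (nhds 0) := by
    simpa using (tendsto_two_rpow_neg (a := 1 - ε) (by linarith)).mul_const K
  have hn3 : Tendsto (fun n : ℕ => 1 + 3 / (n : ℝ)) atTop (nhds 1) := by
    simpa using (tendsto_const_div_atTop_nhds_zero_nat 3).const_add (1 : ℝ)
  have hlim : Tendsto (fun n : ℕ => 4 * (2 * Real.exp (τ n ^ 2 / 32) / (2 ^ n * (τ n / K)) +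
      Real.exp (2 * (τ n ^ 2 / 32)) * (1 + 3 / n) - 1)) atTop (nhds 0) := by
    simp_rw [hr, div_inv_eq_mul]
    have := ((((heu.const_mul 2).mul hinv).add (heu2.mul hn3)).sub_const 1).const_mul 4
    simpa using this
  have hev : ∀ᶠ n : ℕ in atTop, 4 ≤ 2 ^ n * (τ n / K) * Real.exp (-(τ n ^ 2 / 32)) := by
    have h1 : Tendsto (fun n : ℕ => (2 : ℝ) ^ (-(n : ℝ) * (1 - ε)) * K * Real.exp (τ n ^ 2 / 32))
        atTop (nhds 0) := by simpa using hinv.mul heu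
    filter_upwards [h1.eventually (gt_mem_nhds (show (0 : ℝ) < 1 / 4 by norm_num))] with n hn
    rw [hr, Real.exp_neg, ← mul_inv, le_inv_comm₀ (by norm_num) (by positivity)]
    linarith
  refine tendsto_of_tendsto_of_tendsto_of_le_of_le' tendsto_const_nhds hlim
    (Eventually.of_forall fun n => measureReal_nonneg) ?_
  filter_upwards [eventually_gt_atTop 0, hev] with n hn h4
  have hn0 : (0 : ℝ) < n := by exact_mod_cast hn
  have hτn := hτ0 n
  refine prob_few_le hn (b := τ n / 4 * √n) (by positivity) ?_ ?_ h4
  · rw [hK, Real.sqrt_mul (by positivity)]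
    have := Real.pi_pos
    field_simp; norm_num; ring
  · rw [mul_pow, Real.sq_sqrt hn0.le]
    field_simp; norm_num

/-- No measurability of `S n` is needed: it suffices that `(S n)ᶜ` is eventually covered by two
sets of vanishing probability. -/
lemma tendsto_one_of_cover {S A B : (n : ℕ) → Set (Fin n → ℝ)}
    (hA : Tendsto (fun n => (_root_.stdGaussian n).real (A n)) atTop (nhds 0))
    (hB : Tendsto (fun n => (_root_.stdGaussian n).real (B n)) atTop (nhds 0))
    (h : ∀ᶠ n in atTop, ∀ X, X ∉ A n → X ∉ B n → X ∈ S n) :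
    Tendsto (fun n => _root_.stdGaussian n (S n)) atTop (nhds 1) := by
  have key : Tendsto (fun n => (_root_.stdGaussian n).real (S n)) atTop (nhds 1) := by
    have hl : Tendsto (fun n => 1 - ((_root_.stdGaussian n).real (A n) +
        (_root_.stdGaussian n).real (B n))) atTop (nhds 1) := by
      simpa using (hA.add hB).const_sub 1
    refine tendsto_of_tendsto_of_tendsto_of_le_of_le' hl tendsto_const_nhds ?_
      (Eventually.of_forall fun n => measureReal_le_one)
    filter_upwards [h] with n hn
    have hcov : (Set.univ : Set (Fin n → ℝ)) ⊆ S n ∪ (A n ∪ B n) := by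
      intro X _
      by_cases h1 : X ∈ A n
      · exact Or.inr (Or.inl h1)
      by_cases h2 : X ∈ B n
      · exact Or.inr (Or.inr h2)
      exact Or.inl (hn X h1 h2)
    have h1 := measureReal_mono (μ := _root_.stdGaussian n) hcov
    rw [probReal_univ] at h1
    have h2 := measureReal_union_le (μ := _root_.stdGaussian n) (S n) (A n ∪ B n)
    have h3 := measureReal_union_le (μ := _root_.stdGaussian n) (A n) (B n)
    linarith
  rw [← ENNReal.toReal_one] at key
  exact (ENNReal.tendsto_toReal_iff (fun n => measure_ne_top _ _) ENNReal.one_ne_top).1 key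

/-! ### Conclusion -/

/-- With `ρ` furnished by the free-energy-well theorem, `I₁ ∪ {-σ*}` carries at
least `1/2 - δ` of the Gibbs mass, w.h.p. -/
theorem mass_of_I1 (ε : ℝ) (hε : 1 / 2 < ε) (hε1 : ε < 1) (β : ℕ → ℝ)
    (hβ : ∀ n : ℕ, (n : ℝ) * (2 : ℝ) ^ ((n : ℝ) * ε) ≤ β n)
    (σstar : (n : ℕ) → (Fin n → ℝ) → (Fin n → ℝ))
    (hcube : ∀ n X, isCube (σstar n X))
    (hmin : ∀ n X σ, isCube σ →
      |ip (σstar n X) X| / Real.sqrt n ≤ |ip σ X| / Real.sqrt n)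
    (hmeas : ∀ n, Measurable (σstar n)) :
    ∃ ρ : ℝ, 0 < ρ ∧ ρ < 1 ∧ ∃ c : ℝ, 0 < c ∧
      -- `ρ` (and `c`) satisfy the free-energy-well property:
      (Tendsto (fun n : ℕ =>
        stdGaussian n {X : Fin n → ℝ |
          Real.exp (c * β n * (2 : ℝ) ^ (-(n : ℝ) * ε)) *
              gibbsProb n (β n) X (setI2 n ρ (σstar n X)) ≤
            min (gibbsProb n (β n) X (setI1 n ρ (σstar n X)))
              (gibbsProb n (β n) X {σstar n X})})
        atTop (nhds 1)) ∧
      -- and for this `ρ`, the set `I₁ ∪ {-σ*}` has Gibbs mass at least `1/2 - δ` w.h.p.: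
      ∀ δ : ℝ, 0 < δ →
        Tendsto (fun n : ℕ =>
          stdGaussian n {X : Fin n → ℝ |
            1 / 2 - δ ≤ gibbsProb n (β n) X
              (setI1 n ρ (σstar n X) ∪ {fun i => -(σstar n X i)})})
          atTop (nhds 1) := by
  obtain ⟨κ, hκ0, hκ1, hsum⟩ := exists_sum_choose_le (ε - 1 / 2) (by linarith)
  have hA := tendsto_prob_close_pair hε hκ1 hsum
  have hB := tendsto_prob_few (ε := ε) (by linarith) hε1
  have hβτ : ∀ n : ℕ, (n : ℝ) ≤ β n * (2 : ℝ) ^ (-(n : ℝ) * ε) := by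
    intro n
    rw [neg_mul, Real.rpow_neg (by norm_num), ← div_eq_mul_inv, le_div_iff₀ (by positivity)]
    exact hβ n
  -- the free-energy well, on the complement of the two bad events
  have hwell : ∀ n : ℕ, 0 < n → ∀ X : Fin n → ℝ,
      X ∉ {X : Fin n → ℝ | ∃ s t : Fin n → Bool,
        0 < hammingDist s t ∧ (hammingDist s t : ℝ) ≤ κ * n ∧
        |ip (spin s) X| ≤ 2 * (2 : ℝ) ^ (-(n : ℝ) * ε) * √n ∧
        |ip (spin t) X| ≤ 2 * (2 : ℝ) ^ (-(n : ℝ) * ε) * √n} →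
      X ∉ {X : Fin n → ℝ | (Finset.univ.filter fun s : Fin n → Bool =>
        |ip (spin s) X| ≤ (2 : ℝ) ^ (-(n : ℝ) * ε) / 4 * √n).card ≤ 2} →
      Real.exp (1 / 4 * β n * (2 : ℝ) ^ (-(n : ℝ) * ε)) *
          gibbsProb n (β n) X (setI2 n (1 - 2 * κ) (σstar n X)) ≤
        min (gibbsProb n (β n) X (setI1 n (1 - 2 * κ) (σstar n X)))
          (gibbsProb n (β n) X {σstar n X}) := by
    intro n hn X h1 h2
    refine well_of_good hn (by positivity) (hβτ n) X _ (hcube n X) (hmin n X) ?_ ?_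
    · intro s t a b c d
      exact h1 ⟨s, t, a, b, c, d⟩
    · exact not_le.1 h2
  refine ⟨1 - 2 * κ, by linarith, by linarith, 1 / 4, by norm_num, ?_, ?_⟩
  · refine tendsto_one_of_cover hA hB ?_
    filter_upwards [eventually_gt_atTop 0] with n hn X h1 h2
    exact hwell n hn X h1 h2
  · intro δ hδ
    refine tendsto_one_of_cover hA hB ?_
    have hexp : Tendsto (fun n : ℕ => Real.exp (-((n : ℝ) / 4))) atTop (nhds 0) :=
      Real.tendsto_exp_neg_atTop_nhds_zero.comp
        (tendsto_natCast_atTop_atTop.atTop_div_const (by norm_num))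
    filter_upwards [eventually_gt_atTop 0, hexp.eventually (gt_mem_nhds hδ)] with n hn hnδ X h1 h2
    have hw := (hwell n hn X h1 h2).trans (min_le_right _ _)
    have h3 := hw.trans (gibbsProb_le_one n (β n) X _)
    have hI2 : gibbsProb n (β n) X (setI2 n (1 - 2 * κ) (σstar n X)) ≤ Real.exp (-((n : ℝ) / 4)) := by
      rw [Real.exp_neg, ← one_div, le_div_iff₀ (Real.exp_pos _), mul_comm]
      refine le_trans ?_ h3
      have h0 : 0 ≤ gibbsProb n (β n) X (setI2 n (1 - 2 * κ) (σstar n X)) :=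
        gibbsProb_nonneg n (β n) X _
      gcongr
      linarith [hβτ n]
    have := mass_ge_half_sub hn (ρ := 1 - 2 * κ) (b := β n) (by linarith) X (σstar n X) (hcube n X)
    show 1 / 2 - δ ≤ _
    linarith
end
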